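/- Let p be an odd prime. The Haar-measure proportion of monic degree-4 polynomials in Z_p[x] that are irreducible equals (p^{12} + p^{11} + 2p^{10} + 4p^9 - 2p^8 + p^7 + 3p^6 - 6p^5 + 6p^4 - 4p^3 - 2p^2 - 4) / (4(p+1)(p^2+1)(p^9-1)). -/

import Mathlib

open MeasureTheory Polynomial

noncomputable instance (p : ℕ) [Fact p.Prime] : MeasurableSpace ℤ_[p] := borel _
instance (p : ℕ) [Fact p.Prime] : BorelSpace ℤ_[p] := ⟨rfl⟩

/-!
Completing the fourth power and translating turns a quartic into `x⁴ + b x² + c x + e`, which we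
parametrize by `b`, `c` and `D = b² - 4 e`. It is reducible exactly when it has a root or
`s w = c`, `w² = D + 2 b s² + s⁴` is solvable, that is, when it factors as
`(x² + s x + _) (x² - s x + _)`. Up to the perturbation `s⁴`, the system says that
`D + 2 c √(-2 b) = (w + s √(-2 b))²` is a square in a quadratic extension of `ℚ_p`. In the ring of
integers of such an extension, with residue field of size `q`, the nonsquares have density `σ` with
`σ = q⁻¹ ((q - 1) / 2 + 1 - q⁻¹ + q⁻¹ σ)`, so `σ = (q + 2) / (2 (q + 1))`; here `q = p²` if the
extension is unramified and `q = p` if it is ramified.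

Hensel's lemma decides reducibility from the residues of `b`, `c` and `D`, except when
`c = D = 0` and `-2 b` is zero or a nonsquare. A nonsquare `-2 b` leads to the unramified extension.
If `b = 0`, peeling off the next digits of `c` and `D` reaches Eisenstein polynomials, polynomials
with a simple root after scaling, the ramified extension, or finally
`(b, c, D) = (p² b', p³ c', p⁴ D')`, which is reducible exactly when `(b', c', D')` is. The density
therefore satisfies a linear equation.
-/

namespace QuarticDensity

section HaarProbability

variable {G H A : Type*} [AddGroup G] [AddGroup H] [AddGroup A] {T : H →+ G} {π : G →+ A}

theorem preimage_singleton_inter_eq (hexact : Function.Exact T π) {r : A → G}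
    (hr : ∀ a, π (r a) = a) (S : Set G) (a : A) :
    π ⁻¹' {a} ∩ S = (fun g => -r a + g) ⁻¹' (T '' {x | r a + T x ∈ S}) := by
  ext g
  have hfibre : π g = a ↔ ∃ x, T x = -r a + g := by
    rw [← Set.mem_range, ← hexact, map_add, map_neg, hr, neg_add_eq_zero, eq_comm]
  simp only [Set.mem_inter_iff, Set.mem_preimage, Set.mem_singleton_iff, Set.mem_image,
    Set.mem_ofPred_eq, hfibre]
  constructor
  · rintro ⟨⟨x, hx⟩, hg⟩
    exact ⟨x, by simpa [hx] using hg, hx⟩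
  · rintro ⟨x, hS, hx⟩
    exact ⟨⟨x, hx⟩, by simpa [hx] using hS⟩

variable [TopologicalSpace G] [TopologicalSpace H] [IsTopologicalAddGroup G] [CompactSpace H]

theorem isOpenEmbedding_of_exact [T2Space G] [Finite A] (hT : Continuous T)
    (hinj : Function.Injective T) (hexact : Function.Exact T π) : Topology.IsOpenEmbedding T := by
  have hclosed := hT.isClosedEmbedding hinj
  have hfinite : T.range.FiniteIndex :=
    AddMonoidHom.exact_iff.1 hexact ▸ AddSubgroup.finiteIndex_ker π
  refine ⟨hclosed.isEmbedding, ?_⟩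
  simpa using T.range.isOpen_of_isClosed_of_finiteIndex (by simpa using hclosed.isClosed_range)

variable [IsTopologicalAddGroup H] [CompactSpace G] [MeasurableSpace G] [BorelSpace G]
  [MeasurableSpace H] [BorelSpace H]

/-- The Haar probability measure of a compact group. -/
noncomputable def haarProb (G : Type*) [AddGroup G] [TopologicalSpace G] [IsTopologicalAddGroup G]
    [CompactSpace G] [MeasurableSpace G] [BorelSpace G] : Measure G :=
  Measure.addHaarMeasure ⊤

instance : (haarProb G).IsAddHaarMeasure := by unfold haarProb; infer_instance

instance : IsProbabilityMeasure (haarProb G) :=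
  ⟨by simpa [haarProb] using Measure.addHaarMeasure_self (G := G) (K₀ := ⊤)⟩

theorem haarProb_prod [SecondCountableTopologyEither G H] :
    haarProb (G × H) = (haarProb G).prod (haarProb H) :=
  haveI : ((haarProb G).prod (haarProb H)).IsAddHaarMeasure := Measure.prod.instIsAddHaarMeasure _ _
  Measure.isAddHaarMeasure_eq_of_isProbabilityMeasure _ _

theorem toReal_div_toReal_univ (μ : Measure G) [μ.IsAddHaarMeasure] (S : Set G) :
    (μ S).toReal / (μ Set.univ).toReal = (haarProb G).real S := by
  have hμ := Measure.isAddInvariant_eq_smul_of_compactSpace (haarProb G) μ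
  set κ := (haarProb G).addHaarScalarFactor μ
  have hreal (S : Set G) : (haarProb G).real S = κ * (μ S).toReal := by
    rw [hμ]; simp [Measure.real]
  have huniv : κ * (μ Set.univ).toReal = 1 := by rw [← hreal, probReal_univ]
  rw [hreal, eq_inv_of_mul_eq_one_left huniv, div_eq_inv_mul]

/-- The cosets of the image of `H` tile `G`, and on each of them the Haar measure of `G` is the same
multiple of that of `H`. -/
theorem measureReal_eq_average_of_exact [T2Space G] [Fintype A] (hT : Continuous T)
    (hinj : Function.Injective T) (hexact : Function.Exact T π) {r : A → G}
    (hr : ∀ a, π (r a) = a) (S : Set G) :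
    (haarProb G).real S =
      (Fintype.card A : ℝ)⁻¹ * ∑ a, (haarProb H).real {x | r a + T x ∈ S} := by
  have hopen := isOpenEmbedding_of_exact hT hinj hexact
  have hcomap : ((haarProb G).comap T).IsAddHaarMeasure :=
    Measure.IsAddHaarMeasure.comap (mH := inferInstance) (haarProb G) hopen
  have hκ := Measure.isAddInvariant_eq_smul_of_compactSpace ((haarProb G).comap T) (haarProb H)
  set κ := ((haarProb G).comap T).addHaarScalarFactor (haarProb H)
  have hpiece (S : Set G) (a : A) :
      (haarProb G).real (π ⁻¹' {a} ∩ S) = κ * (haarProb H).real {x | r a + T x ∈ S} := by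
    rw [preimage_singleton_inter_eq hexact hr, Measure.real, measure_preimage_add,
      ← hopen.measurableEmbedding.comap_apply, hκ]
    simp [Measure.real]
  have hmeas (a : A) : MeasurableSet (π ⁻¹' {a}) := by
    rw [← Set.inter_univ (π ⁻¹' {a}), preimage_singleton_inter_eq hexact hr]
    simpa using (hopen.isOpen_range.preimage (continuous_const_add (-r a))).measurableSet
  have htotal (S : Set G) :
      (haarProb G).real S = κ * ∑ a, (haarProb H).real {x | r a + T x ∈ S} := by
    have hsum := sum_measureReal_preimage_singleton (μ := (haarProb G).restrict S) Finset.univ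
      fun a _ => hmeas a
    simp only [Finset.coe_univ, Set.preimage_univ, measureReal_restrict_apply (hmeas _),
      measureReal_restrict_apply MeasurableSet.univ, Set.univ_inter, hpiece] at hsum
    rw [← hsum, Finset.mul_sum]
  have huniv := htotal Set.univ
  simp only [Set.mem_univ, Set.ofPred_true, probReal_univ, Finset.sum_const, Finset.card_univ,
    nsmul_eq_mul, mul_one] at huniv
  rw [htotal S, eq_inv_of_mul_eq_one_left huniv.symm]

end HaarProbability

section Digits

variable {p : ℕ} [Fact p.Prime]

open PadicInt (toZMod)

theorem toZMod_eq_zero_iff_dvd {x : ℤ_[p]} : toZMod x = 0 ↔ (p : ℤ_[p]) ∣ x := by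
  rw [← RingHom.mem_ker, PadicInt.ker_toZMod, PadicInt.maximalIdeal_eq_span_p,
    Ideal.mem_span_singleton]

/-- The `p`-adic integer whose lowest digit is `r` and whose higher digits are those of `x`. -/
noncomputable def consDigit (r : ZMod p) (x : ℤ_[p]) : ℤ_[p] := r.val + p * x

@[simp]
theorem toZMod_consDigit (r : ZMod p) (x : ℤ_[p]) : toZMod (consDigit r x) = r := by
  simp [consDigit]

@[simp]
theorem consDigit_zero (x : ℤ_[p]) : consDigit 0 x = p * x := by simp [consDigit]

/-- Here `f` is a `p`-adic coordinate on `G`, along which the subgroup `ι ℤ_p` splits off. -/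
theorem measureReal_eq_average_consDigit {G : Type*} [AddCommGroup G] [TopologicalSpace G]
    [IsTopologicalAddGroup G] [CompactSpace G] [T2Space G] [MeasurableSpace G] [BorelSpace G]
    {f : G →+ ℤ_[p]} (hf : Continuous f) {ι : ℤ_[p] →+ G} (hι : Continuous ι)
    (hfι : ∀ x, f (ι x) = x) (S : Set G) :
    (haarProb G).real S =
      (p : ℝ)⁻¹ * ∑ r, (haarProb G).real {g | g + ι (consDigit r (f g) - f g) ∈ S} := by
  let T : G →+ G :=
    { toFun := fun g => g + ι (p * f g - f g)
      map_zero' := by simp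
      map_add' := fun g h => by simp only [map_add, map_sub, mul_add]; module }
  have hinj : Function.Injective T := by
    refine (injective_iff_map_eq_zero T).2 fun g (hg : g + ι (p * f g - f g) = 0) => ?_
    have hfg : f g = 0 := by
      simpa [hfι, PadicInt.prime_p.ne_zero] using congrArg f hg
    simpa [hfg] using hg
  have hexact : Function.Exact T ((toZMod : ℤ_[p] →+* ZMod p).toAddMonoidHom.comp f) := by
    intro g
    change toZMod (f g) = 0 ↔ ∃ h, h + ι (p * f h - f h) = g
    rw [toZMod_eq_zero_iff_dvd]
    constructor
    · rintro ⟨y, hy⟩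
      refine ⟨g + ι (y - f g), ?_⟩
      rw [map_add, hfι, add_sub_cancel, ← hy, add_assoc, ← map_add, sub_add_sub_cancel',
        sub_self, map_zero, add_zero]
    · rintro ⟨h, rfl⟩
      exact ⟨f h, by simp [hfι]⟩
  rw [measureReal_eq_average_of_exact (T := T)
    (continuous_id.add (hι.comp (by fun_prop))) hinj hexact
    (r := fun r => ι r.val) (fun r => by simp [hfι]) S, ZMod.card]
  congr! 5 with r - g
  change ι r.val + (g + ι (p * f g - f g)) ∈ S ↔ _
  rw [add_left_comm, ← map_add, consDigit, add_sub_assoc]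

/-- The probability that a random triple of `p`-adic integers satisfies `P`. -/
noncomputable def density (P : ℤ_[p] → ℤ_[p] → ℤ_[p] → Prop) : ℝ :=
  (haarProb (ℤ_[p] × ℤ_[p] × ℤ_[p])).real {x | P x.1 x.2.1 x.2.2}

variable {P Q : ℤ_[p] → ℤ_[p] → ℤ_[p] → Prop}

theorem density_congr (h : ∀ b c D, P b c D ↔ Q b c D) : density P = density Q := by
  simp only [density, h]

theorem density_eq_one (h : ∀ b c D, P b c D) : density P = 1 := by simp [density, h]

theorem density_eq_zero (h : ∀ b c D, ¬P b c D) : density P = 0 := by simp [density, h]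

theorem density_mem_Icc (P : ℤ_[p] → ℤ_[p] → ℤ_[p] → Prop) : density P ∈ Set.Icc 0 1 :=
  ⟨measureReal_nonneg, measureReal_le_one⟩

variable (P)

theorem density_eq_average_fst :
    density P = (p : ℝ)⁻¹ * ∑ r, density fun b c D => P (consDigit r b) c D := by
  simpa [density] using measureReal_eq_average_consDigit (f := AddMonoidHom.fst _ _)
    continuous_fst (ι := AddMonoidHom.inl ℤ_[p] (ℤ_[p] × ℤ_[p]))
    (Continuous.prodMk_left 0) (fun _ => rfl) {x | P x.1 x.2.1 x.2.2}

theorem density_eq_average_snd :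
    density P = (p : ℝ)⁻¹ * ∑ r, density fun b c D => P b (consDigit r c) D := by
  simpa [density] using measureReal_eq_average_consDigit
    (f := (AddMonoidHom.fst _ _).comp (AddMonoidHom.snd _ _)) (continuous_fst.comp continuous_snd)
    (ι := (AddMonoidHom.inr ℤ_[p] (ℤ_[p] × ℤ_[p])).comp (AddMonoidHom.inl _ _))
    ((Continuous.prodMk_right 0).comp (Continuous.prodMk_left 0)) (fun _ => rfl)
    {x | P x.1 x.2.1 x.2.2}

theorem density_eq_average_trd :
    density P = (p : ℝ)⁻¹ * ∑ r, density fun b c D => P b c (consDigit r D) := by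
  simpa [density] using measureReal_eq_average_consDigit
    (f := (AddMonoidHom.snd _ _).comp (AddMonoidHom.snd _ _)) (continuous_snd.comp continuous_snd)
    (ι := (AddMonoidHom.inr ℤ_[p] (ℤ_[p] × ℤ_[p])).comp (AddMonoidHom.inr _ _))
    ((Continuous.prodMk_right 0).comp (Continuous.prodMk_right 0)) (fun _ => rfl)
    {x | P x.1 x.2.1 x.2.2}

end Digits

section FiniteFieldSums

variable {F : Type*} [Field F] [Fintype F] {f : F → ℝ} {A B C : ℝ}

theorem sum_eq_of_forall_ne_zero (h : ∀ x ≠ 0, f x = A) :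
    ∑ x, f x = (Fintype.card F - 1) * A + f 0 := by
  classical
  rw [← Finset.add_sum_erase _ f (Finset.mem_univ 0),
    Finset.sum_congr rfl fun x hx => h x (Finset.ne_of_mem_erase hx), Finset.sum_const,
    Finset.card_erase_of_mem (Finset.mem_univ 0), Finset.card_univ, nsmul_eq_mul,
    Nat.cast_pred Fintype.card_pos, add_comm]

theorem sum_eq_of_isSquare_mul (hF : ringChar F ≠ 2) {k : F} (hk : k ≠ 0) (h0 : f 0 = A)
    (hsquare : ∀ x ≠ 0, IsSquare (k * x) → f x = B)
    (hnonsquare : ∀ x, ¬IsSquare (k * x) → f x = C) :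
    ∑ x, f x = A + (Fintype.card F - 1) / 2 * (B + C) := by
  classical
  have hchar : ∀ x ≠ 0,
      f x - (quadraticChar F (k * x) : ℝ) * ((B - C) / 2) = (B + C) / 2 := by
    intro x hx
    by_cases hs : IsSquare (k * x)
    · rw [hsquare x hx hs, (quadraticChar_one_iff_isSquare (mul_ne_zero hk hx)).2 hs, Int.cast_one]
      ring
    · rw [hnonsquare x hs, quadraticChar_neg_one_iff_not_isSquare.2 hs, Int.cast_neg, Int.cast_one]
      ring
  have hsum : ∑ x, (quadraticChar F (k * x) : ℝ) = 0 := by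
    have h := quadraticChar_sum_zero hF
    rw [← Equiv.sum_comp (Equiv.mulLeft₀ k hk)] at h
    exact_mod_cast h
  have h := sum_eq_of_forall_ne_zero hchar
  simp only [Finset.sum_sub_distrib, ← Finset.sum_mul, hsum, zero_mul, sub_zero, mul_zero, h0,
    quadraticChar_zero, Int.cast_zero] at h
  rw [h]
  ring

end FiniteFieldSums

theorem eq_of_forall_exists_eq_add_mul {ι : Type*} {g : ι → ℝ} {a ρ v : ℝ}
    (hg : Bornology.IsBounded (Set.range g)) (hρ₀ : 0 ≤ ρ) (hρ₁ : ρ < 1)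
    (h : ∀ i, ∃ j, g i = a + ρ * g j) (hv : v = a + ρ * v) (i : ι) : g i = v := by
  obtain ⟨M, hM⟩ := isBounded_iff_forall_norm_le.1 hg
  have hbdd : BddAbove (Set.range fun i => |g i - v|) := by
    refine ⟨M + |v|, Set.forall_mem_range.2 fun i => (abs_sub _ _).trans ?_⟩
    gcongr
    exact hM _ (Set.mem_range_self i)
  have : Nonempty ι := ⟨i⟩
  have hsup : ⨆ i, |g i - v| ≤ ρ * ⨆ i, |g i - v| := by
    refine ciSup_le fun i => ?_
    obtain ⟨j, hj⟩ := h i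
    calc |g i - v| = ρ * |g j - v| := by
          rw [show g i - v = ρ * (g j - v) by linear_combination hj - hv, abs_mul,
            abs_of_nonneg hρ₀]
      _ ≤ ρ * ⨆ i, |g i - v| := by gcongr; exact le_ciSup hbdd j
  have hle : |g i - v| ≤ 0 := (le_ciSup hbdd i).trans (by nlinarith)
  exact sub_eq_zero.1 (abs_nonpos_iff.1 hle)

section DigitRules

variable {p : ℕ} [Fact p.Prime] {P : ℤ_[p] → ℤ_[p] → ℤ_[p] → Prop} {A : ℝ}

open PadicInt (toZMod)

theorem average_eq_of_forall_ne_zero {f : ZMod p → ℝ} (h : ∀ r ≠ 0, f r = A) :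
    (p : ℝ)⁻¹ * ∑ r, f r = (1 - (p : ℝ)⁻¹) * A + (p : ℝ)⁻¹ * f 0 := by
  have hp : (p : ℝ) ≠ 0 := Nat.cast_ne_zero.2 (Fact.out : p.Prime).ne_zero
  rw [sum_eq_of_forall_ne_zero h, ZMod.card]
  field_simp

theorem density_eq_of_fst_unit
    (h : ∀ r ≠ 0, (density fun b c D => P (consDigit r b) c D) = A) :
    density P = (1 - (p : ℝ)⁻¹) * A + (p : ℝ)⁻¹ * density fun b c D => P ((p : ℤ_[p]) * b) c D := by
  rw [density_eq_average_fst, average_eq_of_forall_ne_zero h]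
  simp only [consDigit_zero]

theorem density_eq_of_snd_unit_imp (h : ∀ b c D, toZMod c ≠ 0 → P b c D) :
    density P = 1 - (p : ℝ)⁻¹ + (p : ℝ)⁻¹ * density fun b c D => P b (p * c) D := by
  rw [density_eq_average_snd, average_eq_of_forall_ne_zero fun r hr =>
    density_eq_one fun b c D => h b _ D (by rwa [toZMod_consDigit])]
  simp only [consDigit_zero, mul_one]

theorem density_eq_of_snd_unit_imp_not (h : ∀ b c D, toZMod c ≠ 0 → ¬P b c D) :
    density P = (p : ℝ)⁻¹ * density fun b c D => P b (p * c) D := by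
  rw [density_eq_average_snd, average_eq_of_forall_ne_zero fun r hr =>
    density_eq_zero fun b c D => h b _ D (by rwa [toZMod_consDigit])]
  simp only [consDigit_zero, mul_zero, zero_add]

theorem density_eq_of_trd_unit_imp (h : ∀ b c D, toZMod D ≠ 0 → P b c D) :
    density P = 1 - (p : ℝ)⁻¹ + (p : ℝ)⁻¹ * density fun b c D => P b c (p * D) := by
  rw [density_eq_average_trd, average_eq_of_forall_ne_zero fun r hr =>
    density_eq_one fun b c D => h b c _ (by rwa [toZMod_consDigit])]
  simp only [consDigit_zero, mul_one]

theorem density_eq_of_trd_unit_iff (hp : p ≠ 2) {k : ZMod p} (hk : k ≠ 0)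
    (h : ∀ b c D, toZMod D ≠ 0 → (P b c D ↔ ¬IsSquare (k * toZMod D))) :
    density P = (p : ℝ)⁻¹ * ((p - 1) / 2 + density fun b c D => P b c (p * D)) := by
  rw [density_eq_average_trd, sum_eq_of_isSquare_mul (by rwa [ZMod.ringChar_zmod_n]) hk
    (density_congr fun b c D => by rw [consDigit_zero])
    (fun r hr hs => density_eq_zero fun b c D hP =>
      (h b c _ (by rwa [toZMod_consDigit])).1 hP (by rwa [toZMod_consDigit]))
    (fun r hs => density_eq_one fun b c D => (h b c _ ?_).2 (by rwa [toZMod_consDigit])), ZMod.card]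
  · ring
  · rw [toZMod_consDigit]
    rintro rfl
    simp at hs

end DigitRules

section IrreducibleQuartics

variable {R : Type*} [CommRing R]

/-- The monic quartic with lower coefficients `a`, in increasing order of degree. -/
noncomputable def quartic (a : Fin 4 → R) : R[X] := X ^ 4 + ∑ i : Fin 4, C (a i) * X ^ (i : ℕ)

theorem quartic_eq (a : Fin 4 → R) :
    quartic a = X ^ 4 + (C (a 0) + C (a 1) * X + C (a 2) * X ^ 2 + C (a 3) * X ^ 3) := by
  simp [quartic, Fin.sum_univ_four]

theorem natDegree_quartic [Nontrivial R] (a : Fin 4 → R) : (quartic a).natDegree = 4 := by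
  rw [quartic_eq]; compute_degree!

theorem monic_quartic (a : Fin 4 → R) : (quartic a).Monic := by
  rw [quartic_eq]; monicity!

theorem quartic_injective : Function.Injective (quartic : (Fin 4 → R) → R[X]) := by
  intro a b h
  funext i
  have hcoeff := congrArg (fun f => coeff f (i : ℕ)) h
  simp only [quartic_eq] at hcoeff
  fin_cases i <;> simpa [coeff_X, coeff_C, coeff_X_pow] using hcoeff

theorem exists_quartic_eq {f : R[X]} (hf : f.Monic) (hd : f.natDegree = 4) :
    ∃ a, quartic a = f := by
  refine ⟨fun i => f.coeff i, ?_⟩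
  conv_rhs => rw [hf.as_sum, hd]
  rw [quartic, Fin.sum_univ_eq_sum_range (fun i => C (f.coeff i) * X ^ i)]

theorem isRoot_quartic_iff {a : Fin 4 → R} {x : R} :
    (quartic a).IsRoot x ↔ x ^ 4 + a 3 * x ^ 3 + a 2 * x ^ 2 + a 1 * x + a 0 = 0 := by
  simp only [IsRoot.def, quartic_eq, eval_add, eval_mul, eval_pow, eval_X, eval_C]
  ring_nf

theorem quadratic_mul_quadratic (m₁ n₁ m₂ n₂ : R) :
    (X ^ 2 + C m₁ * X + C n₁) * (X ^ 2 + C m₂ * X + C n₂) =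
      quartic ![n₁ * n₂, m₁ * n₂ + m₂ * n₁, n₁ + n₂ + m₁ * m₂, m₁ + m₂] := by
  simp only [quartic_eq, Matrix.cons_val, C_add, C_mul]
  ring

theorem monic_quadratic_iff [Nontrivial R] {f : R[X]} :
    f.Monic ∧ f.natDegree = 2 ↔ ∃ m n, f = X ^ 2 + C m * X + C n := by
  constructor
  · rintro ⟨hf, hd⟩
    refine ⟨f.coeff 1, f.coeff 0, ?_⟩
    conv_lhs => rw [hf.as_sum, hd]
    simp only [Finset.sum_range_succ, Finset.sum_range_zero, pow_zero, pow_one]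
    ring
  · rintro ⟨m, n, rfl⟩
    exact ⟨by monicity!, by compute_degree!⟩

theorem irreducible_iff_of_natDegree_eq_four [IsDomain R] {f : R[X]} (hf : f.Monic)
    (hd : f.natDegree = 4) :
    Irreducible f ↔ (∀ x, ¬f.IsRoot x) ∧
      ∀ g h : R[X], g.Monic ∧ g.natDegree = 2 → h.Monic ∧ h.natDegree = 2 → g * h ≠ f := by
  have hf1 : f ≠ 1 := by rintro rfl; simp at hd
  rw [hf.irreducible_iff_lt_natDegree_lt hf1, hd]
  constructor
  · intro hirr
    refine ⟨fun x hx => hirr _ (monic_X_sub_C x) (by simp) (dvd_iff_isRoot.2 hx), ?_⟩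
    rintro g h ⟨hg, hgd⟩ - rfl
    exact hirr g hg (by simp [hgd]) (dvd_mul_right g h)
  · rintro ⟨hroot, hquadratic⟩ g hg hgd ⟨h, rfl⟩
    have hh : h.Monic := hg.of_mul_monic_left hf
    rw [hg.natDegree_mul hh] at hd
    obtain hg1 | hg2 : g.natDegree = 1 ∨ g.natDegree = 2 := by
      simp only [Finset.mem_Ioc] at hgd
      omega
    · refine hroot (-g.coeff 0) (dvd_iff_isRoot.1 ?_)
      rw [C_neg, sub_neg_eq_add, ← hg.eq_X_add_C hg1]
      exact dvd_mul_right g h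
    · exact hquadratic g h ⟨hg, hg2⟩ ⟨hh, by omega⟩ rfl

theorem irreducible_quartic_iff [IsDomain R] {a : Fin 4 → R} :
    Irreducible (quartic a) ↔
      (∀ x, x ^ 4 + a 3 * x ^ 3 + a 2 * x ^ 2 + a 1 * x + a 0 ≠ 0) ∧
      ∀ m₁ n₁ m₂ n₂, ![n₁ * n₂, m₁ * n₂ + m₂ * n₁, n₁ + n₂ + m₁ * m₂, m₁ + m₂] ≠ a := by
  simp only [irreducible_iff_of_natDegree_eq_four (monic_quartic a) (natDegree_quartic a),
    isRoot_quartic_iff, monic_quadratic_iff, ← quartic_injective.ne_iff,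
    ← quadratic_mul_quadratic]
  refine and_congr_right' ⟨fun h m₁ n₁ m₂ n₂ => h _ _ ⟨m₁, n₁, rfl⟩ ⟨m₂, n₂, rfl⟩, ?_⟩
  rintro h _ _ ⟨m₁, n₁, rfl⟩ ⟨m₂, n₂, rfl⟩
  exact h m₁ n₁ m₂ n₂

/-- The system `s w = c`, `κ w² = D + β s² + η s⁴` has a solution. For `κ = η = 1`, `β = 2b` and
`D = b² - 4e` this encodes the factorizations of `x⁴ + b x² + c x + e` as
`(x² + s x + n) (x² - s x + n')` with `w = n' - n`; the other parameters appear when `c` and `D` are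
divided by powers of a prime. -/
def SystemSolvable (κ β η c D : R) : Prop :=
  ∃ s w, s * w = c ∧ κ * w ^ 2 = D + β * s ^ 2 + η * s ^ 4

/-- The quartic `x⁴ + b x² + c x + (b² - D) / 4` has a root; stated without the division. -/
def HasRoot (b c D : R) : Prop := ∃ x, (2 * x ^ 2 + b) ^ 2 + 4 * c * x = D

/-- The quartic `x⁴ + b x² + c x + (b² - D) / 4` has a root or is a product of two monic
quadratics; stated without the division. -/
def IsReducibleQuartic (b c D : R) : Prop := HasRoot b c D ∨ SystemSolvable 1 (2 * b) 1 c D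

theorem systemSolvable_iff_exists_factorization [IsDomain R] {v : R} (hv : 4 * v = 1)
    {b c e : R} :
    SystemSolvable 1 (2 * b) 1 c (b ^ 2 - 4 * e) ↔
      ∃ m₁ n₁ m₂ n₂ : R,
        ![n₁ * n₂, m₁ * n₂ + m₂ * n₁, n₁ + n₂ + m₁ * m₂, m₁ + m₂] = ![e, c, b, 0] := by
  have h4 : (4 : R) ≠ 0 := left_ne_zero_of_mul_eq_one hv
  simp only [Matrix.vecCons_inj, and_true]
  constructor
  · rintro ⟨s, w, hc, he⟩
    refine ⟨s, 2 * v * (b + s ^ 2 - w), -s, 2 * v * (b + s ^ 2 + w), ?_, ?_, ?_, by ring⟩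
    · refine mul_left_cancel₀ h4 ?_
      linear_combination (4 * v + 1) * ((b + s ^ 2) ^ 2 - w ^ 2) * hv - he
    · linear_combination hc + s * w * hv
    · linear_combination (b + s ^ 2) * hv
  · rintro ⟨s, n₁, m₂, n₂, rfl, rfl, rfl, hm⟩
    obtain rfl : m₂ = -s := eq_neg_of_add_eq_zero_right hm
    exact ⟨s, n₂ - n₁, by ring, by ring⟩

theorem irreducible_depressed_iff [IsDomain R] {v : R} (hv : 4 * v = 1) {b c e : R} :
    Irreducible (quartic ![e, c, b, 0]) ↔ ¬IsReducibleQuartic b c (b ^ 2 - 4 * e) := by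
  have h4 : (4 : R) ≠ 0 := left_ne_zero_of_mul_eq_one hv
  have hroot (x : R) : (2 * x ^ 2 + b) ^ 2 + 4 * c * x = b ^ 2 - 4 * e ↔
      x ^ 4 + 0 * x ^ 3 + b * x ^ 2 + c * x + e = 0 := by
    rw [← mul_eq_zero_iff_left h4, ← sub_eq_zero]
    ring_nf
  rw [irreducible_quartic_iff, IsReducibleQuartic, HasRoot,
    systemSolvable_iff_exists_factorization hv, not_or]
  push Not
  simp only [Matrix.cons_val, hroot, ne_eq]

/-- The coefficients `b, c` and the quantity `D = b² - 4e` of the quartic `x⁴ + b x² + c x + e`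
obtained from `x⁴ + 4 q x³ + a₂ x² + a₁ x + a₀` by the substitution `x ↦ x - q`. -/
def depress (q a₂ a₁ a₀ : R) : R × R × R :=
  (a₂ - 6 * q ^ 2, a₁ - 2 * a₂ * q + 8 * q ^ 3,
    (a₂ - 6 * q ^ 2) ^ 2 - 4 * (a₀ - a₁ * q + a₂ * q ^ 2 - 3 * q ^ 4))

theorem irreducible_quartic_iff_depress [IsDomain R] {v : R} (hv : 4 * v = 1) {a : Fin 4 → R}
    {b c D : R} (hdepress : depress (v * a 3) (a 2) (a 1) (a 0) = (b, c, D)) :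
    Irreducible (quartic a) ↔ ¬IsReducibleQuartic b c D := by
  obtain ⟨q, hq⟩ : ∃ q, q = v * a 3 := ⟨_, rfl⟩
  have h3 : a 3 = 4 * q := by rw [hq]; linear_combination -a 3 * hv
  rw [← hq] at hdepress
  simp only [depress, Prod.mk.injEq] at hdepress
  obtain ⟨rfl, rfl, rfl⟩ := hdepress
  rw [← irreducible_depressed_iff hv, ← MulEquiv.irreducible_iff (taylorEquiv (-q))]
  change Irreducible (taylor (-q) (quartic a)) ↔ _
  congr! 1
  simp only [taylor_apply, quartic_eq, Matrix.cons_val, h3, C_add, C_sub, C_mul, C_neg, C_pow,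
    add_comp, mul_comp, pow_comp, X_comp, C_comp, ofNat_comp, C_ofNat, C_0]
  ring

end IrreducibleQuartics

theorem measurePreserving_skewProduct {G H : Type*} [AddGroup G] [TopologicalSpace G]
    [IsTopologicalAddGroup G] [CompactSpace G] [MeasurableSpace G] [BorelSpace G]
    [AddGroup H] [TopologicalSpace H] [IsTopologicalAddGroup H] [CompactSpace H]
    [MeasurableSpace H] [BorelSpace H] [SecondCountableTopologyEither G H] {f : G → G}
    {g : G → H → H} (hf : MeasurePreserving f (haarProb G) (haarProb G))
    (hg : Continuous (Function.uncurry g))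
    (hgf : ∀ x, MeasurePreserving (g x) (haarProb H) (haarProb H)) :
    MeasurePreserving (fun z : G × H => (f z.1, g z.1 z.2)) (haarProb (G × H))
      (haarProb (G × H)) := by
  rw [haarProb_prod]
  exact hf.skew_product hg.measurable (Filter.Eventually.of_forall fun x => (hgf x).map_eq)

section DepressedQuartics

theorem depress_injective {R : Type*} [CommRing R] (h4 : IsUnit (4 : R)) (v : R) :
    Function.Injective fun a : Fin 4 → R => (a 3, depress (v * a 3) (a 2) (a 1) (a 0)) := by
  intro a b h
  simp only [depress, Prod.mk.injEq] at h
  obtain ⟨h₃, h₂, h₁, h₀⟩ := h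
  rw [h₃] at h₂ h₁ h₀
  have h₂ : a 2 = b 2 := by linear_combination h₂
  rw [h₂] at h₁ h₀
  have h₁ : a 1 = b 1 := by linear_combination h₁
  have h₀ : a 0 = b 0 := h4.mul_left_cancel (by rw [h₁] at h₀; linear_combination -h₀)
  funext i
  fin_cases i <;> assumption

variable {p : ℕ} [Fact p.Prime]

theorem measurePreserving_unit_mul_add {u : ℤ_[p]} (hu : IsUnit u) (t : ℤ_[p]) :
    MeasurePreserving (fun x => u * x + t) (haarProb ℤ_[p]) (haarProb ℤ_[p]) := by
  obtain ⟨u, rfl⟩ := hu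
  have hmul : MeasurePreserving (AddMonoidHom.mulLeft (u : ℤ_[p])) (haarProb ℤ_[p])
      (haarProb ℤ_[p]) :=
    AddMonoidHom.measurePreserving (continuous_const_mul (u : ℤ_[p]))
      (fun y => ⟨(↑u⁻¹ : ℤ_[p]) * y, by simp⟩) rfl
  exact (measurePreserving_add_right (haarProb ℤ_[p]) t).comp hmul

/-- `depress q` is triangular, with unit diagonal coefficients `1, 1, -4`. -/
theorem measurePreserving_depress (h4 : IsUnit (4 : ℤ_[p])) (q : ℤ_[p]) :
    MeasurePreserving (fun x : ℤ_[p] × ℤ_[p] × ℤ_[p] => depress q x.1 x.2.1 x.2.2)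
      (haarProb _) (haarProb _) := by
  have h := measurePreserving_skewProduct
    (measurePreserving_add_right (haarProb ℤ_[p]) (-6 * q ^ 2))
    (g := fun (a₂ : ℤ_[p]) (x : ℤ_[p] × ℤ_[p]) => (x.1 + (-2 * a₂ * q + 8 * q ^ 3),
      -4 * x.2 + ((a₂ - 6 * q ^ 2) ^ 2 - 4 * (-x.1 * q + a₂ * q ^ 2 - 3 * q ^ 4))))
    (by unfold Function.uncurry; fun_prop)
    fun a₂ => measurePreserving_skewProduct (measurePreserving_add_right _ _)
      (g := fun a₁ a₀ =>
        -4 * a₀ + ((a₂ - 6 * q ^ 2) ^ 2 - 4 * (-a₁ * q + a₂ * q ^ 2 - 3 * q ^ 4)))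
      (by unfold Function.uncurry; fun_prop)
      fun a₁ => measurePreserving_unit_mul_add h4.neg _
  convert h using 2 with x
  simp only [depress, Prod.mk.injEq]
  exact ⟨by ring, by ring, by ring⟩

theorem measurePreserving_depress_quartic (h4 : IsUnit (4 : ℤ_[p])) (v : ℤ_[p]) :
    MeasurePreserving
      (fun a : Fin 4 → ℤ_[p] => (a 3, depress (v * a 3) (a 2) (a 1) (a 0)))
      (haarProb _) (haarProb _) := by
  let e : (Fin 4 → ℤ_[p]) →+ ℤ_[p] × ℤ_[p] × ℤ_[p] × ℤ_[p] :=
    { toFun := fun a => (a 3, a 2, a 1, a 0)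
      map_zero' := rfl
      map_add' := fun _ _ => rfl }
  have he : MeasurePreserving e (haarProb _) (haarProb _) :=
    AddMonoidHom.measurePreserving
      (by change Continuous fun a : Fin 4 → ℤ_[p] => (a 3, a 2, a 1, a 0); fun_prop)
      (fun x => ⟨![x.2.2.2, x.2.2.1, x.2.1, x.1], rfl⟩) (by rw [measure_univ, measure_univ])
  exact (measurePreserving_skewProduct (MeasurePreserving.id _)
    (g := fun (a₃ : ℤ_[p]) (x : ℤ_[p] × ℤ_[p] × ℤ_[p]) => depress (v * a₃) x.1 x.2.1 x.2.2)
    (by unfold Function.uncurry depress; fun_prop)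
    fun a₃ => measurePreserving_depress h4 _).comp he

theorem haarProb_real_depress_mem (h4 : IsUnit (4 : ℤ_[p])) (v : ℤ_[p])
    (S : Set (ℤ_[p] × ℤ_[p] × ℤ_[p])) :
    (haarProb (Fin 4 → ℤ_[p])).real {a | depress (v * a 3) (a 2) (a 1) (a 0) ∈ S} =
      (haarProb _).real S := by
  have hcont : Continuous fun a : Fin 4 → ℤ_[p] =>
      (a 3, depress (v * a 3) (a 2) (a 1) (a 0)) := by
    unfold depress
    fun_prop
  have hemb := (hcont.isClosedEmbedding (depress_injective h4 v)).measurableEmbedding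
  have h := (measurePreserving_depress_quartic h4 v).measure_preimage_emb hemb (Set.univ ×ˢ S)
  rw [haarProb_prod, Measure.prod_prod, measure_univ, one_mul] at h
  rw [Measure.real, Measure.real, ← h]
  congr 2
  ext a
  simp

end DepressedQuartics

section FiniteFieldCount

/-- The monic irreducible polynomials of degree `d` over `K`. -/
def monicIrreducibles (K : Type*) [Field K] (d : ℕ) : Set K[X] :=
  {f | f.Monic ∧ Irreducible f ∧ f.natDegree = d}

open UniqueFactorizationMonoid in
theorem sum_natDegree_normalizedFactors {K : Type*} [Field K] [DecidableEq K] {f : K[X]}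
    (hf : Squarefree f) : ∑ g ∈ (normalizedFactors f).toFinset, g.natDegree = f.natDegree := by
  have hnodup := (squarefree_iff_nodup_normalizedFactors hf.ne_zero).1 hf
  rw [← Multiset.toFinset_eq hnodup, Finset.sum_mk,
    ← natDegree_multiset_prod _ (zero_notMem_normalizedFactors f)]
  exact natDegree_eq_of_degree_eq
    (degree_eq_degree_of_associated (prod_normalizedFactors hf.ne_zero))

theorem ncard_irreducible_quartic (K : Type*) [Field K] :
    {a : Fin 4 → K | Irreducible (quartic a)}.ncard = (monicIrreducibles K 4).ncard := by
  rw [← Set.ncard_image_of_injective _ quartic_injective]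
  congr 1
  ext f
  constructor
  · rintro ⟨a, ha, rfl⟩
    exact ⟨monic_quartic a, ha, natDegree_quartic a⟩
  · rintro ⟨hmonic, hf, hd⟩
    obtain ⟨a, rfl⟩ := exists_quartic_eq hmonic hd
    exact ⟨a, hf, rfl⟩

variable (K : Type*) [Field K] [Finite K]

theorem squarefree_X_pow_card_pow_sub_X {n : ℕ} (hn : n ≠ 0) :
    Squarefree (X ^ Nat.card K ^ n - X : K[X]) := by
  have := Fintype.ofFinite K
  obtain ⟨p, _⟩ := CharP.exists K
  have hp : p ∣ Nat.card K := by
    rw [← CharP.cast_eq_zero_iff K, Nat.card_eq_fintype_card, Nat.cast_card_eq_zero]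
  exact (galois_poly_separable p _ (hp.trans (dvd_pow_self _ hn))).squarefree

open UniqueFactorizationMonoid in
/-- Gauss: `X ^ qⁿ - X` is the product of the monic irreducible polynomials of degree
dividing `n`. -/
theorem sum_divisors_mul_ncard_monicIrreducibles {n : ℕ} (hn : n ≠ 0) :
    ∑ d ∈ n.divisors, d * (monicIrreducibles K d).ncard = Nat.card K ^ n := by
  classical
  set f : K[X] := X ^ Nat.card K ^ n - X
  have hf : Squarefree f := squarefree_X_pow_card_pow_sub_X K hn
  set s := (normalizedFactors f).toFinset
  have hmem {g : K[X]} : g ∈ s ↔ Irreducible g ∧ g.Monic ∧ g.natDegree ∣ n := by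
    rw [Multiset.mem_toFinset, Polynomial.mem_normalizedFactors_iff hf.ne_zero]
    exact and_congr_right fun hg => and_congr_right fun _ =>
      hg.natDegree_dvd_iff_dvd_X_pow_card_pow_sub_X.symm
  have hfibre {d : ℕ} (hd : d ∈ n.divisors) :
      (monicIrreducibles K d).ncard = {g ∈ s | g.natDegree = d}.card := by
    rw [← Set.ncard_coe_finset]
    congr 1
    ext g
    simp only [monicIrreducibles, Set.mem_ofPred_eq, Finset.coe_filter, hmem]
    constructor
    · rintro ⟨hmonic, hg, rfl⟩
      exact ⟨⟨hg, hmonic, Nat.dvd_of_mem_divisors hd⟩, rfl⟩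
    · rintro ⟨⟨hg, hmonic, -⟩, rfl⟩
      exact ⟨hmonic, hg, rfl⟩
  calc ∑ d ∈ n.divisors, d * (monicIrreducibles K d).ncard
      = ∑ d ∈ n.divisors, ∑ g ∈ s with g.natDegree = d, g.natDegree := by
        refine Finset.sum_congr rfl fun d hd => ?_
        rw [Finset.sum_congr rfl fun g hg => (Finset.mem_filter.1 hg).2, Finset.sum_const,
          smul_eq_mul, hfibre hd, mul_comm]
    _ = ∑ g ∈ s, g.natDegree := Finset.sum_fiberwise_of_maps_to
        (fun g hg => Nat.mem_divisors.2 ⟨(hmem.1 hg).2.2, hn⟩) _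
    _ = Nat.card K ^ n := by
      rw [sum_natDegree_normalizedFactors hf,
        FiniteField.X_pow_card_pow_sub_X_natDegree_eq K hn Finite.one_lt_card]

theorem four_mul_ncard_monicIrreducibles_four :
    4 * (monicIrreducibles K 4).ncard + Nat.card K ^ 2 = Nat.card K ^ 4 := by
  have h2 := sum_divisors_mul_ncard_monicIrreducibles K two_ne_zero
  have h4 := sum_divisors_mul_ncard_monicIrreducibles K four_ne_zero
  rw [show Nat.divisors 2 = {1, 2} from rfl] at h2
  rw [show Nat.divisors 4 = {1, 2, 4} from rfl] at h4
  rw [Finset.sum_pair (by decide)] at h2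
  rw [Finset.sum_insert (by decide), Finset.sum_pair (by decide)] at h4
  lia

variable {K}

theorem ncard_irreducible_quartic_eq_mul {v : K} (hv : 4 * v = 1) :
    {a : Fin 4 → K | Irreducible (quartic a)}.ncard =
      Nat.card K * {t : K × K × K | ¬IsReducibleQuartic t.1 t.2.1 t.2.2}.ncard := by
  have hinj := depress_injective (IsUnit.of_mul_eq_one v hv) v
  have hbij := hinj.bijective_of_nat_card_le (by simp [Nat.card_prod, Nat.card_fun, pow_succ'])
  rw [← Set.ncard_univ, ← Set.ncard_prod,
    ← Set.ncard_preimage_of_injective_subset_range hinj (by simp [hbij.2.range_eq])]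
  congr 1
  ext a
  simp only [Set.mem_ofPred_eq, Set.mem_preimage, Set.mem_prod, Set.mem_univ, true_and]
  exact irreducible_quartic_iff_depress hv rfl

theorem four_mul_ncard_not_isReducibleQuartic {v : K} (hv : 4 * v = 1) :
    4 * {t : K × K × K | ¬IsReducibleQuartic t.1 t.2.1 t.2.2}.ncard + Nat.card K =
      Nat.card K ^ 3 := by
  have h := four_mul_ncard_monicIrreducibles_four K
  rw [← ncard_irreducible_quartic, ncard_irreducible_quartic_eq_mul hv] at h
  refine Nat.eq_of_mul_eq_mul_left (Nat.card_pos (α := K)) ?_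
  linarith

end FiniteFieldCount

section SmoothSolutions

/-- The system `s w = c`, `κ w² = D + β s² + η s⁴` has a solution at which its Jacobian determinant
does not vanish. -/
def SystemSmoothlySolvable {R : Type*} [CommRing R] (κ β η c D : R) : Prop :=
  ∃ s w, s * w = c ∧ κ * w ^ 2 = D + β * s ^ 2 + η * s ^ 4 ∧
    2 * κ * w ^ 2 + 2 * β * s ^ 2 + 4 * η * s ^ 4 ≠ 0

/-- The quartic `x⁴ + b x² + c x + (b² - D) / 4` has a simple root. -/
def HasSimpleRoot {R : Type*} [CommRing R] (b c D : R) : Prop :=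
  ∃ x, (2 * x ^ 2 + b) ^ 2 + 4 * c * x = D ∧ 8 * x * (2 * x ^ 2 + b) + 4 * c ≠ 0

section Map

variable {R S : Type*} [CommRing R] [CommRing S] (f : R →+* S)

theorem SystemSolvable.map {κ β η c D : R} (h : SystemSolvable κ β η c D) :
    SystemSolvable (f κ) (f β) (f η) (f c) (f D) := by
  obtain ⟨s, w, rfl, h⟩ := h
  exact ⟨f s, f w, (map_mul f s w).symm, by simpa using congrArg f h⟩

theorem HasRoot.map {b c D : R} (h : HasRoot b c D) : HasRoot (f b) (f c) (f D) := by
  obtain ⟨x, rfl⟩ := h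
  exact ⟨f x, by simp only [map_add, map_mul, map_pow, map_ofNat f]⟩

theorem IsReducibleQuartic.map {b c D : R} (h : IsReducibleQuartic b c D) :
    IsReducibleQuartic (f b) (f c) (f D) :=
  Or.imp (HasRoot.map f) (fun h => by simpa only [map_mul, map_one, map_ofNat f] using h.map f) h

end Map

variable {F : Type*} [Field F]

theorem eq_zero_of_sq_eq_mul_sq {k s w : F} (hk : ¬IsSquare k) (h : w ^ 2 = k * s ^ 2) :
    s = 0 ∧ w = 0 := by
  have hs : s = 0 := by
    by_contra hs
    exact hk ⟨w / s, by field_simp; exact h.symm⟩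
  exact ⟨hs, by simpa [hs] using h⟩

theorem systemSmoothlySolvable_one_zero_zero (h2 : (2 : F) ≠ 0) {c D : F} (hD : D ≠ 0)
    (h : IsSquare D) : SystemSmoothlySolvable 1 0 0 c D := by
  obtain ⟨w, rfl⟩ := h
  have hw : w ≠ 0 := left_ne_zero_of_mul hD
  exact ⟨c / w, w, by field_simp, by ring, by simp [h2, hw]⟩

theorem systemSmoothlySolvable_zero_zero (h2 : (2 : F) ≠ 0) {k c D : F} (hk : k ≠ 0) (hD : D ≠ 0)
    (h : IsSquare (-k * D)) : SystemSmoothlySolvable 0 k 0 c D := by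
  obtain ⟨x, hx⟩ := h
  have hx0 : x ≠ 0 := by rintro rfl; simp [hk, hD] at hx
  refine ⟨x / k, c * k / x, by field_simp, ?_, by simp [h2, hk, hx0]⟩
  rw [zero_mul, zero_mul, add_zero]
  field_simp
  linear_combination hx

theorem SystemSolvable.systemSmoothlySolvable (h2 : (2 : F) ≠ 0) {k c D : F}
    (hk : ¬IsSquare (-k)) (h0 : ¬(c = 0 ∧ D = 0)) (h : SystemSolvable 1 k 0 c D) :
    SystemSmoothlySolvable 1 k 0 c D := by
  obtain ⟨s, w, rfl, h⟩ := h
  refine ⟨s, w, rfl, h, fun hJ => ?_⟩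
  obtain ⟨rfl, rfl⟩ := eq_zero_of_sq_eq_mul_sq (s := s) (w := w) hk
    (mul_left_cancel₀ h2 (by linear_combination hJ))
  exact h0 ⟨by simp, by simpa using h.symm⟩

/-- If `r` is a double root, then `(x - r)² (x² + 2 r x + 3 r² + b)` is a factorization into coprime
quadratics, unless `r` is a triple root and `-3 r` is the fourth root. -/
theorem HasRoot.hasSimpleRoot_or_systemSmoothlySolvable (h2 : (2 : F) ≠ 0) {b c D : F}
    (h0 : ¬(b = 0 ∧ c = 0 ∧ D = 0)) (h : HasRoot b c D) :
    HasSimpleRoot b c D ∨ SystemSmoothlySolvable 1 (2 * b) 1 c D := by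
  obtain ⟨r, rfl⟩ := h
  by_cases hsimple : 8 * r * (2 * r ^ 2 + b) + 4 * c = 0
  swap
  · exact Or.inl ⟨r, rfl, hsimple⟩
  obtain rfl : c = -2 * r * (2 * r ^ 2 + b) :=
    mul_left_cancel₀ (pow_ne_zero 2 h2) (by linear_combination hsimple)
  by_cases htriple : 6 * r ^ 2 + b = 0
  · obtain rfl : b = -6 * r ^ 2 := by linear_combination htriple
    have hr : r ≠ 0 := by
      rintro rfl
      exact h0 (by simp)
    refine Or.inl ⟨-3 * r, by ring, ?_⟩
    rw [show 8 * (-3 * r) * (2 * (-3 * r) ^ 2 + -6 * r ^ 2) +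
      4 * (-2 * r * (2 * r ^ 2 + -6 * r ^ 2)) = -(2 ^ 8 * r ^ 3) by ring]
    exact neg_ne_zero.2 (mul_ne_zero (pow_ne_zero _ h2) (pow_ne_zero _ hr))
  · refine Or.inr ⟨2 * r, -(2 * r ^ 2 + b), by ring, by ring, ?_⟩
    rw [show 2 * 1 * (-(2 * r ^ 2 + b)) ^ 2 + 2 * (2 * b) * (2 * r) ^ 2 + 4 * 1 * (2 * r) ^ 4 =
      2 * (6 * r ^ 2 + b) ^ 2 by ring]
    exact mul_ne_zero h2 (pow_ne_zero 2 htriple)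

/-- Two quadratic factors with a common root give a root; the exception `x⁴ + b x² + b² / 4` is the
square of a quadratic, and splits into coprime quadratics if `-2 b` is a nonzero square. -/
theorem IsReducibleQuartic.hasSimpleRoot_or_systemSmoothlySolvable (h2 : (2 : F) ≠ 0) {b c D : F}
    (h0 : ¬(c = 0 ∧ D = 0 ∧ (b = 0 ∨ ¬IsSquare (-2 * b)))) (h : IsReducibleQuartic b c D) :
    HasSimpleRoot b c D ∨ SystemSmoothlySolvable 1 (2 * b) 1 c D := by
  have hroot : HasRoot b c D → HasSimpleRoot b c D ∨ SystemSmoothlySolvable 1 (2 * b) 1 c D :=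
    HasRoot.hasSimpleRoot_or_systemSmoothlySolvable h2 fun h => h0 ⟨h.2.1, h.2.2, Or.inl h.1⟩
  obtain h | ⟨s, w, rfl, h⟩ := h
  · exact hroot h
  by_cases hJ : 2 * 1 * w ^ 2 + 2 * (2 * b) * s ^ 2 + 4 * 1 * s ^ 4 = 0
  swap
  · exact Or.inr ⟨s, w, rfl, h, hJ⟩
  have hcommon : w ^ 2 + 2 * b * s ^ 2 + 2 * s ^ 4 = 0 :=
    mul_left_cancel₀ h2 (by linear_combination hJ)
  by_cases hs : s = 0
  · subst hs
    obtain rfl : w = 0 := by simpa using hcommon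
    obtain rfl : D = 0 := by simpa using h.symm
    obtain ⟨hb, x, hx⟩ : b ≠ 0 ∧ IsSquare (-2 * b) := by
      simpa using h0
    refine Or.inr ⟨x, 0, by simp, by linear_combination x ^ 2 * hx, ?_⟩
    rw [show 2 * 1 * (0 : F) ^ 2 + 2 * (2 * b) * x ^ 2 + 4 * 1 * x ^ 4 = 2 ^ 3 * b ^ 2 by
      linear_combination (4 * b - 4 * x ^ 2) * hx]
    exact mul_ne_zero (pow_ne_zero _ h2) (pow_ne_zero _ hb)
  · refine hroot ⟨w / (2 * s), ?_⟩
    field_simp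
    linear_combination (4 * s ^ 4) * h + (w ^ 2 + 2 * b * s ^ 2 + 2 * s ^ 4) * hcommon

end SmoothSolutions

section Hensel

theorem systemSolvable_of_isUnit_left {R : Type*} [CommRing R] {κ β η c D s : R} (hs : IsUnit s)
    (h : D * s ^ 2 + β * s ^ 4 + η * s ^ 6 = κ * c ^ 2) : SystemSolvable κ β η c D := by
  obtain ⟨w, rfl⟩ := hs.dvd (a := c)
  exact ⟨s, w, rfl, (hs.pow 2).mul_left_cancel (by linear_combination -h)⟩

theorem systemSolvable_of_isUnit_right {R : Type*} [CommRing R] {κ β η c D w : R} (hw : IsUnit w)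
    (h : κ * w ^ 6 = D * w ^ 4 + β * c ^ 2 * w ^ 2 + η * c ^ 4) : SystemSolvable κ β η c D := by
  obtain ⟨s, rfl⟩ := hw.dvd (a := c)
  exact ⟨s, w, mul_comm s w, (hw.pow 4).mul_left_cancel (by linear_combination h)⟩

open PadicInt (toZMod)

variable {p : ℕ} [Fact p.Prime]

theorem toZMod_ne_zero_iff_norm_eq_one {x : ℤ_[p]} : toZMod x ≠ 0 ↔ ‖x‖ = 1 := by
  rw [Ne, toZMod_eq_zero_iff_dvd, ← PadicInt.norm_lt_one_iff_dvd, not_lt,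
    (PadicInt.norm_le_one x).ge_iff_eq]

theorem isUnit_of_toZMod_ne_zero {x : ℤ_[p]} (h : toZMod x ≠ 0) : IsUnit x :=
  PadicInt.isUnit_iff.2 (toZMod_ne_zero_iff_norm_eq_one.1 h)

theorem exists_root_of_toZMod {f : ℤ_[p][X]} {r : ZMod p} (h0 : (f.map toZMod).eval r = 0)
    (h1 : (f.map toZMod).derivative.eval r ≠ 0) : ∃ z, f.eval z = 0 ∧ toZMod z = r := by
  obtain ⟨a, rfl⟩ := ZMod.ringHom_surjective (toZMod : ℤ_[p] →+* ZMod p) r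
  rw [derivative_map, eval_map_apply, toZMod_ne_zero_iff_norm_eq_one] at h1
  rw [eval_map_apply] at h0
  have h0' : ‖f.eval a‖ < 1 := by
    rwa [PadicInt.norm_lt_one_iff_dvd, ← toZMod_eq_zero_iff_dvd]
  obtain ⟨z, hz, hza, -⟩ := hensels_lemma (F := f) (a := a)
    (by simpa only [coe_aeval_eq_eval, h1, one_pow] using h0')
  rw [coe_aeval_eq_eval, h1, PadicInt.norm_lt_one_iff_dvd, ← toZMod_eq_zero_iff_dvd, map_sub,
    sub_eq_zero] at hza
  exact ⟨z, hz, hza⟩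

theorem hasRoot_of_toZMod {b c D : ℤ_[p]} (h : HasSimpleRoot (toZMod b) (toZMod c) (toZMod D)) :
    HasRoot b c D := by
  obtain ⟨r, h0, h1⟩ := h
  let f : ℤ_[p][X] := (2 * X ^ 2 + C b) ^ 2 + 4 * C c * X - C D
  have hf : (f.map toZMod).eval r =
      (2 * r ^ 2 + toZMod b) ^ 2 + 4 * toZMod c * r - toZMod D := by simp [f]
  have hf' : (f.map toZMod).derivative.eval r =
      8 * r * (2 * r ^ 2 + toZMod b) + 4 * toZMod c := by simp [f, derivative_pow]; ring
  obtain ⟨z, hz, -⟩ := exists_root_of_toZMod (f := f) (by rw [hf, h0, sub_self]) (by rwa [hf'])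
  exact ⟨z, by simpa [f, sub_eq_zero] using hz⟩

theorem systemSolvable_of_toZMod_of_left_ne_zero {κ β η c D : ℤ_[p]} {s w : ZMod p} (hs : s ≠ 0)
    (hsw : s * w = toZMod c)
    (h : toZMod κ * w ^ 2 = toZMod D + toZMod β * s ^ 2 + toZMod η * s ^ 4)
    (hJ : 2 * toZMod κ * w ^ 2 + 2 * toZMod β * s ^ 2 + 4 * toZMod η * s ^ 4 ≠ 0) :
    SystemSolvable κ β η c D := by
  let f : ℤ_[p][X] := C D * X ^ 2 + C β * X ^ 4 + C η * X ^ 6 - C κ * C c ^ 2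
  have hf : (f.map toZMod).eval s =
      toZMod D * s ^ 2 + toZMod β * s ^ 4 + toZMod η * s ^ 6 - toZMod κ * toZMod c ^ 2 := by
    simp [f]
  have hf' : (f.map toZMod).derivative.eval s =
      2 * toZMod D * s + 4 * toZMod β * s ^ 3 + 6 * toZMod η * s ^ 5 := by
    simp [f, derivative_pow]; ring
  obtain ⟨z, hz, rfl⟩ := exists_root_of_toZMod (f := f) (r := s)
    (by rw [hf, ← hsw]; linear_combination -s ^ 2 * h)
    (by rw [hf']; convert mul_ne_zero hs hJ using 1; linear_combination -2 * s * h)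
  exact systemSolvable_of_isUnit_left (isUnit_of_toZMod_ne_zero hs)
    (by simpa [f, sub_eq_zero] using hz)

theorem systemSolvable_of_toZMod_of_right_ne_zero {κ β η c D : ℤ_[p]} {s w : ZMod p} (hw : w ≠ 0)
    (hsw : s * w = toZMod c)
    (h : toZMod κ * w ^ 2 = toZMod D + toZMod β * s ^ 2 + toZMod η * s ^ 4)
    (hJ : 2 * toZMod κ * w ^ 2 + 2 * toZMod β * s ^ 2 + 4 * toZMod η * s ^ 4 ≠ 0) :
    SystemSolvable κ β η c D := by
  let f : ℤ_[p][X] := C κ * X ^ 6 - (C D * X ^ 4 + C β * C c ^ 2 * X ^ 2 + C η * C c ^ 4)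
  have hf : (f.map toZMod).eval w =
      toZMod κ * w ^ 6 -
        (toZMod D * w ^ 4 + toZMod β * toZMod c ^ 2 * w ^ 2 + toZMod η * toZMod c ^ 4) := by
    simp [f]
  have hf' : (f.map toZMod).derivative.eval w =
      6 * toZMod κ * w ^ 5 - (4 * toZMod D * w ^ 3 + 2 * toZMod β * toZMod c ^ 2 * w) := by
    simp [f, derivative_pow]; ring
  obtain ⟨z, hz, rfl⟩ := exists_root_of_toZMod (f := f) (r := w)
    (by rw [hf, ← hsw]; linear_combination w ^ 4 * h)
    (by
      rw [hf', ← hsw]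
      convert mul_ne_zero (pow_ne_zero 3 hw) hJ using 1
      linear_combination 4 * w ^ 3 * h)
  exact systemSolvable_of_isUnit_right (isUnit_of_toZMod_ne_zero hw)
    (by simpa [f, sub_eq_zero] using hz)

theorem systemSolvable_of_toZMod {κ β η c D : ℤ_[p]}
    (h : SystemSmoothlySolvable (toZMod κ) (toZMod β) (toZMod η) (toZMod c) (toZMod D)) :
    SystemSolvable κ β η c D := by
  obtain ⟨s, w, hsw, h, hJ⟩ := h
  by_cases hs : s = 0
  · have hw : w ≠ 0 := by rintro rfl; simp [hs] at hJ
    exact systemSolvable_of_toZMod_of_right_ne_zero hw hsw h hJ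
  · exact systemSolvable_of_toZMod_of_left_ne_zero hs hsw h hJ

theorem isReducibleQuartic_of_toZMod (h2 : (2 : ZMod p) ≠ 0) {b c D : ℤ_[p]}
    (h0 : ¬(toZMod c = 0 ∧ toZMod D = 0 ∧ (toZMod b = 0 ∨ ¬IsSquare (-2 * toZMod b))))
    (h : IsReducibleQuartic (toZMod b) (toZMod c) (toZMod D)) : IsReducibleQuartic b c D := by
  refine (h.hasSimpleRoot_or_systemSmoothlySolvable h2 h0).imp hasRoot_of_toZMod fun h =>
    systemSolvable_of_toZMod ?_
  simpa only [map_mul, map_one, map_ofNat] using h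

end Hensel

section Scaling

variable {R : Type*} [CommRing R] {π b β η c D s w : R}

theorem dvd_and_dvd_of_dvd_system (hπ : Prime π)
    (hanisotropic : ∀ s, π ∣ β * s ^ 2 + η * s ^ 4 → π ∣ s) (hsw : π ∣ s * w)
    (h : w ^ 2 = π * D + β * s ^ 2 + η * s ^ 4) : π ∣ s ∧ π ∣ w := by
  have hs : π ∣ s := by
    obtain hs | ⟨v, rfl⟩ := hπ.dvd_or_dvd hsw
    · exact hs
    · exact hanisotropic s ⟨π * v ^ 2 - D, by linear_combination -h⟩
  obtain ⟨t, rfl⟩ := hs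
  exact ⟨dvd_mul_right π t, hπ.dvd_of_dvd_pow (n := 2)
    ⟨D + π * β * t ^ 2 + π ^ 3 * η * t ^ 4, by linear_combination h⟩⟩

theorem dvd_of_prime_mul_sq_eq (hπ : Prime π) (hβ : ¬π ∣ β)
    (h : π * w ^ 2 = π * D + β * s ^ 2 + π * η * s ^ 4) : π ∣ s :=
  hπ.dvd_of_dvd_pow <| (hπ.dvd_or_dvd
    ⟨w ^ 2 - D - η * s ^ 4, by linear_combination -h⟩ : π ∣ β ∨ π ∣ s ^ 2).resolve_left hβ

theorem SystemSolvable.dvd_of_mul_mul (hπ : Prime π)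
    (h : SystemSolvable 1 (π * β) (π * η) c (π * D)) : π ∣ c := by
  obtain ⟨s, w, rfl, h⟩ := h
  exact dvd_mul_of_dvd_right (hπ.dvd_of_dvd_pow (n := 2)
    ⟨D + β * s ^ 2 + η * s ^ 4, by linear_combination h⟩) s

theorem SystemSolvable.dvd_of_not_dvd (hπ : Prime π) (hβ : ¬π ∣ β)
    (h : SystemSolvable π β (π * η) c (π * D)) : π ∣ c := by
  obtain ⟨s, w, rfl, h⟩ := h
  exact dvd_mul_of_dvd_left (dvd_of_prime_mul_sq_eq hπ hβ h) w

theorem dvd_of_dvd_mul_sq_add_pow_four (hπ : Prime π) (b s : R)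
    (h : π ∣ 2 * (π * b) * s ^ 2 + 1 * s ^ 4) : π ∣ s := by
  obtain ⟨t, ht⟩ := h
  exact hπ.dvd_of_dvd_pow (n := 4) ⟨t - 2 * b * s ^ 2, by linear_combination ht⟩

variable [IsDomain R]

theorem SystemSolvable.dvd_and_dvd (hπ : Prime π)
    (hanisotropic : ∀ s, π ∣ β * s ^ 2 + η * s ^ 4 → π ∣ s)
    (h : SystemSolvable 1 β η (π * c) (π * D)) : π ∣ c ∧ π ∣ D := by
  obtain ⟨s, w, hsw, h⟩ := h
  obtain ⟨⟨s, rfl⟩, ⟨w, rfl⟩⟩ := dvd_and_dvd_of_dvd_system hπ hanisotropic ⟨c, hsw⟩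
    (by rwa [one_mul] at h)
  exact ⟨⟨s * w, mul_left_cancel₀ hπ.ne_zero (by linear_combination -hsw)⟩,
    ⟨w ^ 2 - β * s ^ 2 - π ^ 2 * η * s ^ 4,
      mul_left_cancel₀ hπ.ne_zero (by linear_combination -h)⟩⟩

theorem systemSolvable_sq_mul_sq_mul_iff (hπ : Prime π)
    (hanisotropic : ∀ s, π ∣ β * s ^ 2 + η * s ^ 4 → π ∣ s) :
    SystemSolvable 1 β η (π ^ 2 * c) (π ^ 2 * D) ↔ SystemSolvable 1 β (π ^ 2 * η) c D := by
  have hπ2 := pow_ne_zero 2 hπ.ne_zero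
  constructor
  · rintro ⟨s, w, hsw, h⟩
    obtain ⟨⟨s, rfl⟩, ⟨w, rfl⟩⟩ := dvd_and_dvd_of_dvd_system (D := π * D) (s := s) (w := w) hπ
      hanisotropic ⟨π * c, by linear_combination hsw⟩ (by linear_combination h)
    exact ⟨s, w, mul_left_cancel₀ hπ2 (by linear_combination hsw),
      mul_left_cancel₀ hπ2 (by linear_combination h)⟩
  · rintro ⟨s, w, rfl, h⟩
    exact ⟨π * s, π * w, by ring, by linear_combination π ^ 2 * h⟩

theorem systemSolvable_one_mul_mul_iff (hπ : Prime π) :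
    SystemSolvable 1 (π * β) (π ^ 2 * η) (π * c) (π * D) ↔
      SystemSolvable π β (π * η) c D := by
  constructor
  · rintro ⟨s, w, hsw, h⟩
    obtain ⟨w, rfl⟩ : π ∣ w := hπ.dvd_of_dvd_pow (n := 2)
      ⟨D + β * s ^ 2 + π * η * s ^ 4, by linear_combination h⟩
    exact ⟨s, w, mul_left_cancel₀ hπ.ne_zero (by linear_combination hsw),
      mul_left_cancel₀ hπ.ne_zero (by linear_combination h)⟩
  · rintro ⟨s, w, rfl, h⟩
    exact ⟨s, π * w, by ring, by linear_combination π * h⟩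

theorem systemSolvable_prime_mul_mul_iff (hπ : Prime π) (hβ : ¬π ∣ β) :
    SystemSolvable π β (π * η) (π * c) (π * D) ↔
      SystemSolvable 1 (π * β) (π ^ 2 * (π ^ 2 * η)) c D := by
  constructor
  · rintro ⟨s, w, hsw, h⟩
    obtain ⟨s, rfl⟩ := dvd_of_prime_mul_sq_eq hπ hβ h
    exact ⟨s, w, mul_left_cancel₀ hπ.ne_zero (by linear_combination hsw),
      mul_left_cancel₀ hπ.ne_zero (by linear_combination h)⟩
  · rintro ⟨s, w, rfl, h⟩
    exact ⟨π * s, w, by ring, by linear_combination π * h⟩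

theorem hasRoot_mul_mul_mul_iff (hπ : Prime π) (h2 : ¬π ∣ 2) :
    HasRoot (π * b) (π * c) (π * D) ↔ ∃ y, π * ((2 * π * y ^ 2 + b) ^ 2 + 4 * c * y) = D := by
  constructor
  · rintro ⟨x, hx⟩
    have hx2 : π ∣ 2 * x ^ 2 := hπ.dvd_of_dvd_pow
      (n := 2) ⟨D - 4 * x ^ 2 * b - π * b ^ 2 - 4 * c * x, by linear_combination hx⟩
    obtain ⟨y, rfl⟩ := hπ.dvd_of_dvd_pow ((hπ.dvd_or_dvd hx2).resolve_left h2)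
    exact ⟨y, mul_left_cancel₀ hπ.ne_zero (by linear_combination hx)⟩
  · rintro ⟨y, rfl⟩
    exact ⟨π * y, by ring⟩

theorem HasRoot.dvd_sub_sq (hπ : Prime π) (h2 : ¬π ∣ 2)
    (h : HasRoot (π * b) (π ^ 2 * c) (π ^ 2 * D)) : π ∣ D - b ^ 2 := by
  rw [pow_two, mul_assoc, mul_assoc, hasRoot_mul_mul_mul_iff hπ h2] at h
  obtain ⟨y, hy⟩ := h
  obtain rfl := mul_left_cancel₀ hπ.ne_zero hy
  exact ⟨4 * π * y ^ 4 + 4 * b * y ^ 2 + 4 * c * y, by ring⟩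

theorem not_isReducibleQuartic_mul_mul_mul (hπ : Prime π) (h2 : ¬π ∣ 2) (hD : ¬π ∣ D) :
    ¬IsReducibleQuartic (π * b) (π * c) (π * D) := by
  rintro (h | h)
  · obtain ⟨y, rfl⟩ := (hasRoot_mul_mul_mul_iff hπ h2).1 h
    exact hD (dvd_mul_right _ _)
  · exact hD (h.dvd_and_dvd hπ (dvd_of_dvd_mul_sq_add_pow_four hπ b)).2

theorem systemSolvable_mul_sq_mul_sq_mul_iff (hπ : Prime π) :
    SystemSolvable 1 (2 * (π * b)) 1 (π ^ 2 * c) (π ^ 2 * D) ↔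
      SystemSolvable 1 (2 * (π * b)) (π ^ 2) c D := by
  simpa only [mul_one] using
    systemSolvable_sq_mul_sq_mul_iff hπ (dvd_of_dvd_mul_sq_add_pow_four hπ b)

theorem not_isReducibleQuartic_sq_mul_cube_mul_cube_mul (hπ : Prime π) (h2 : ¬π ∣ 2)
    (hD : ¬π ∣ D) : ¬IsReducibleQuartic (π ^ 2 * b) (π ^ 3 * c) (π ^ 3 * D) := by
  rintro (h | h)
  · rw [pow_succ' π 2, mul_assoc, mul_assoc, pow_two, mul_assoc, ← pow_two] at h
    obtain ⟨y, hy⟩ := (hasRoot_mul_mul_mul_iff hπ h2).1 h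
    exact hD ⟨(2 * y ^ 2 + b) ^ 2 + 4 * c * y,
      mul_left_cancel₀ (pow_ne_zero 2 hπ.ne_zero) (by linear_combination -hy)⟩
  · rw [pow_succ π 2, mul_assoc, mul_assoc, pow_two, mul_assoc, ← pow_two,
      systemSolvable_mul_sq_mul_sq_mul_iff hπ] at h
    obtain ⟨s, w, -, h⟩ := h
    obtain ⟨w, rfl⟩ : π ∣ w := hπ.dvd_of_dvd_pow (n := 2)
      ⟨D + 2 * (π * b) * s ^ 2 + π * s ^ 4, by linear_combination h⟩
    exact hD ⟨w ^ 2 - 2 * b * s ^ 2 - s ^ 4,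
      mul_left_cancel₀ hπ.ne_zero (by linear_combination -h)⟩

theorem isReducibleQuartic_sq_mul_cube_mul_pow_four_mul_iff (hπ : Prime π) (h2 : ¬π ∣ 2) :
    IsReducibleQuartic (π ^ 2 * b) (π ^ 3 * c) (π ^ 4 * D) ↔ IsReducibleQuartic b c D := by
  refine or_congr ⟨fun h => ?_, ?_⟩ ⟨fun h => ?_, ?_⟩
  · rw [pow_two, pow_succ' π 2, pow_succ' π 3, mul_assoc, mul_assoc, mul_assoc,
      hasRoot_mul_mul_mul_iff hπ h2] at h
    obtain ⟨y, hy⟩ := h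
    exact ⟨y, mul_left_cancel₀ (pow_ne_zero 3 hπ.ne_zero) (by linear_combination hy)⟩
  · rintro ⟨x, rfl⟩
    exact ⟨π * x, by ring⟩
  · rw [pow_two, mul_assoc, show π ^ 3 * c = π ^ 2 * (π * c) by ring,
      show π ^ 4 * D = π ^ 2 * (π ^ 2 * D) by ring, systemSolvable_mul_sq_mul_sq_mul_iff hπ] at h
    obtain ⟨s, w, hsw, h⟩ := h
    obtain ⟨w, rfl⟩ : π ∣ w := hπ.dvd_of_dvd_pow (n := 2)
      ⟨π * D + 2 * (π * b) * s ^ 2 + π * s ^ 4, by linear_combination h⟩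
    exact ⟨s, w, mul_left_cancel₀ hπ.ne_zero (by linear_combination hsw),
      mul_left_cancel₀ (pow_ne_zero 2 hπ.ne_zero) (by linear_combination h)⟩
  · rintro ⟨s, w, rfl, h⟩
    exact ⟨π * s, π ^ 2 * w, by ring, by linear_combination π ^ 4 * h⟩

end Scaling

section QuadraticExtension

theorem isSquare_quadraticAlgebra_mk_iff {R : Type*} [CommRing R] [IsDomain R] (h2 : (2 : R) ≠ 0)
    {k c D : R} : IsSquare (⟨D, 2 * c⟩ : QuadraticAlgebra R (-k) 0) ↔ SystemSolvable 1 k 0 c D := by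
  constructor
  · rintro ⟨⟨w, s⟩, h⟩
    rw [QuadraticAlgebra.mk_mul_mk, QuadraticAlgebra.mk.injEq] at h
    exact ⟨s, w, mul_left_cancel₀ h2 (by linear_combination -h.2), by linear_combination -h.1⟩
  · rintro ⟨s, w, rfl, h⟩
    refine ⟨⟨w, s⟩, ?_⟩
    rw [QuadraticAlgebra.mk_mul_mk, QuadraticAlgebra.mk.injEq]
    exact ⟨by linear_combination -h, by ring⟩

theorem sum_eq_of_systemSolvable {K : Type*} [Field K] [Fintype K] (h2 : (2 : K) ≠ 0) {k : K}
    (hk : ¬IsSquare (-k)) {f : K × K → ℝ}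
    (hsolvable : ∀ t ≠ 0, SystemSolvable 1 k 0 t.1 t.2 → f t = 0)
    (hunsolvable : ∀ t, ¬SystemSolvable 1 k 0 t.1 t.2 → f t = 1) :
    ∑ t, f t = (Fintype.card K ^ 2 - 1) / 2 + f 0 := by
  let F := QuadraticAlgebra K (-k) 0
  have : Fact (∀ r : K, r ^ 2 ≠ -k + 0 * r) :=
    ⟨fun r h => hk ⟨r, by linear_combination -h⟩⟩
  let e : F ≃ K × K :=
    { toFun := fun z => (2⁻¹ * z.im, z.re)
      invFun := fun t => ⟨t.2, 2 * t.1⟩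
      left_inv := fun z => by simp [h2]
      right_inv := fun t => by simp [h2] }
  have he0 : e 0 = 0 := by simp [e]
  have he : ∀ z : F, SystemSolvable 1 k 0 (e z).1 (e z).2 ↔ IsSquare (1 * z) := fun z => by
    rw [one_mul, ← isSquare_quadraticAlgebra_mk_iff h2]
    exact iff_of_eq (congrArg IsSquare (e.symm_apply_apply z))
  let _ : Fintype F := Fintype.ofEquiv _ e.symm
  have hF : ringChar F ≠ 2 := by
    rw [← Algebra.ringChar_eq K F]
    exact fun h => h2 (by simpa [h] using ringChar.Nat.cast_ringChar (R := K))
  rw [← e.sum_comp, sum_eq_of_isSquare_mul hF one_ne_zero (A := f 0) (B := 0) (C := 1),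
    Fintype.card_congr e, Fintype.card_prod]
  · push_cast
    ring
  · rw [he0]
  · exact fun z hz hs => hsolvable _ (fun h => hz (e.injective (h.trans he0.symm))) ((he z).2 hs)
  · exact fun z hs => hunsolvable _ fun h => hs ((he z).1 h)

end QuadraticExtension

section JointDigitRules

variable {p : ℕ} [Fact p.Prime] {P : ℤ_[p] → ℤ_[p] → ℤ_[p] → Prop}

open PadicInt (toZMod)

theorem density_eq_average_snd_trd (P : ℤ_[p] → ℤ_[p] → ℤ_[p] → Prop) :
    density P = ((p : ℝ) ^ 2)⁻¹ * ∑ t : ZMod p × ZMod p,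
      density fun b c D => P b (consDigit t.1 c) (consDigit t.2 D) := by
  rw [density_eq_average_snd, Fintype.sum_prod_type,
    Finset.sum_congr rfl fun _ _ => density_eq_average_trd _, ← Finset.mul_sum]
  ring

theorem density_eq_of_snd_trd_unit_imp (h : ∀ b c D, ¬(toZMod c = 0 ∧ toZMod D = 0) → P b c D) :
    density P = 1 - ((p : ℝ) ^ 2)⁻¹ +
      ((p : ℝ) ^ 2)⁻¹ * density fun b c D => P b (p * c) (p * D) := by
  rw [density_eq_of_snd_unit_imp fun b c D hc => h b c D fun h0 => hc h0.1,
    density_eq_of_trd_unit_imp fun b c D hD => h b _ D fun h0 => hD h0.2]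
  ring

theorem density_eq_of_snd_trd_unit_iff_systemSolvable (h2 : (2 : ZMod p) ≠ 0) {k : ZMod p}
    (hk : ¬IsSquare (-k)) (h : ∀ b c D, ¬(toZMod c = 0 ∧ toZMod D = 0) →
      (P b c D ↔ ¬SystemSolvable 1 k 0 (toZMod c) (toZMod D))) :
    density P = ((p : ℝ) ^ 2)⁻¹ *
      (((p : ℝ) ^ 2 - 1) / 2 + density fun b c D => P b (p * c) (p * D)) := by
  rw [density_eq_average_snd_trd, sum_eq_of_systemSolvable h2 hk, ZMod.card]
  · simp only [Prod.fst_zero, Prod.snd_zero, consDigit_zero]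
  · intro t ht hs
    refine density_eq_zero fun b c D hP => (h b _ _ ?_).1 hP ?_
    · simpa only [toZMod_consDigit, ← Prod.mk_eq_zero] using ht
    · simpa only [toZMod_consDigit] using hs
  · intro t hs
    refine density_eq_one fun b c D => (h b _ _ ?_).2 ?_
    · simp only [toZMod_consDigit]
      rintro ⟨h1, h2⟩
      exact hs ⟨0, 0, by simp [h1], by simp [h2]⟩
    · simpa only [toZMod_consDigit] using hs

theorem density_eq_of_residues_ne_zero_iff {Q : ZMod p → ZMod p → ZMod p → Prop}
    (hQ : ∀ b, ¬Q b 0 0) (h : ∀ b c D, ¬(toZMod c = 0 ∧ toZMod D = 0) →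
      (P b c D ↔ Q (toZMod b) (toZMod c) (toZMod D))) :
    density P = ((p : ℝ) ^ 3)⁻¹ * ({t : ZMod p × ZMod p × ZMod p | Q t.1 t.2.1 t.2.2}.ncard +
      ∑ r, density fun b c D => P (consDigit r b) (p * c) (p * D)) := by
  classical
  have hterm : ∀ (r : ZMod p) (t : ZMod p × ZMod p),
      (density fun b c D => P (consDigit r b) (consDigit t.1 c) (consDigit t.2 D)) =
        (if Q r t.1 t.2 then 1 else 0) +
          if t = 0 then density fun b c D => P (consDigit r b) (p * c) (p * D) else 0 := by
    intro r t
    obtain rfl | ht := eq_or_ne t 0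
    · simp [hQ]
    have hP : ∀ b c D, P (consDigit r b) (consDigit t.1 c) (consDigit t.2 D) ↔ Q r t.1 t.2 := by
      intro b c D
      simpa only [toZMod_consDigit] using h (consDigit r b) (consDigit t.1 c) (consDigit t.2 D)
        (by simpa only [toZMod_consDigit, ← Prod.mk_eq_zero] using ht)
    by_cases hq : Q r t.1 t.2
    · simp [density_eq_one fun b c D => (hP b c D).2 hq, hq, ht]
    · simp [density_eq_zero fun b c D hPt => hq ((hP b c D).1 hPt), hq, ht]
  rw [density_eq_average_fst, Finset.sum_congr rfl fun _ _ => density_eq_average_snd_trd _,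
    ← Finset.mul_sum]
  simp only [hterm, Finset.sum_add_distrib, Finset.sum_ite_eq', Finset.mem_univ, if_true]
  rw [← Fintype.sum_prod_type' (f := fun (r : ZMod p) (t : ZMod p × ZMod p) =>
    if Q r t.1 t.2 then (1 : ℝ) else 0), Finset.sum_boole, ← Set.ncard_coe_finset]
  simp only [Finset.coe_filter, Finset.mem_univ, true_and]
  ring

end JointDigitRules

/-- With `q` the size of the residue field: `2` is a unit, so a nonzero residue is a nonsquare with
probability `1/2`, and an element divisible by the prime but not by its square is never a square. -/
theorem eq_of_forall_exists_nonsquare_recursion {ι : Type*} {g : ι → ℝ} {q : ℝ}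
    (hg : ∀ i, g i ∈ Set.Icc 0 1) (hq : 1 < q)
    (h : ∀ i, ∃ j, g i = q⁻¹ * ((q - 1) / 2 + (1 - q⁻¹ + q⁻¹ * g j))) (i : ι) :
    g i = (q + 2) / (2 * (q + 1)) := by
  have hq0 : q ≠ 0 := by positivity
  have hq1 : q + 1 ≠ 0 := by positivity
  refine eq_of_forall_exists_eq_add_mul (a := q⁻¹ * ((q - 1) / 2 + (1 - q⁻¹))) (ρ := (q ^ 2)⁻¹)
    ((Metric.isBounded_Icc 0 1).subset (Set.range_subset_iff.2 hg)) (by positivity)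
    (inv_lt_one_of_one_lt₀ (one_lt_pow₀ hq two_ne_zero)) (fun i => ?_) (by field_simp; ring) i
  obtain ⟨j, hj⟩ := h i
  exact ⟨j, by rw [hj]; ring⟩

section SystemDensity

variable {p : ℕ} [Fact p.Prime]

open PadicInt (toZMod prime_p)

theorem two_ne_zero_zmod (hp : p ≠ 2) : (2 : ZMod p) ≠ 0 :=
  Ring.two_ne_zero (by rwa [ZMod.ringChar_zmod_n])

theorem one_lt_natCast_prime : (1 : ℝ) < p := Nat.one_lt_cast.2 (Fact.out : p.Prime).one_lt

theorem density_not_systemSolvable_mul_mul {β : ℤ_[p] → ℤ_[p]} {η : ℤ_[p]}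
    (hanisotropic : ∀ b s, (p : ℤ_[p]) ∣ β b * s ^ 2 + η * s ^ 4 → (p : ℤ_[p]) ∣ s) :
    (density fun b c D => ¬SystemSolvable 1 (β b) η (p * c) (p * D)) = 1 - ((p : ℝ) ^ 2)⁻¹ +
      ((p : ℝ) ^ 2)⁻¹ * density fun b c D => ¬SystemSolvable 1 (β b) (p ^ 2 * η) c D := by
  rw [density_eq_of_snd_trd_unit_imp]
  · simp only [← mul_assoc, ← pow_two,
      systemSolvable_sq_mul_sq_mul_iff prime_p (hanisotropic _)]
  · intro b c D h0 h
    simp only [toZMod_eq_zero_iff_dvd] at h0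
    exact h0 (h.dvd_and_dvd prime_p (hanisotropic b))

theorem density_not_systemSolvable_of_not_isSquare (hp : p ≠ 2) {k : ZMod p} (hk : ¬IsSquare (-k))
    {β : ℤ_[p] → ℤ_[p]} (hβ : ∀ b, toZMod (β b) = k) (η : ℤ_[p]) :
    (density fun b c D => ¬SystemSolvable 1 (β b) (p * η) c D) =
      ((p : ℝ) ^ 2 + 2) / (2 * ((p : ℝ) ^ 2 + 1)) := by
  have h2 := two_ne_zero_zmod hp
  have hk0 : k ≠ 0 := by rintro rfl; simp at hk
  have hanisotropic (η b s : ℤ_[p]) (h : (p : ℤ_[p]) ∣ β b * s ^ 2 + p * η * s ^ 4) :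
      (p : ℤ_[p]) ∣ s := by
    rw [← toZMod_eq_zero_iff_dvd] at h ⊢
    simpa [hβ, hk0] using h
  have hresidue (η b c D : ℤ_[p]) (h0 : ¬(toZMod c = 0 ∧ toZMod D = 0)) :
      SystemSolvable 1 (β b) (p * η) c D ↔ SystemSolvable 1 k 0 (toZMod c) (toZMod D) :=
    ⟨fun h => by simpa [hβ] using h.map toZMod, fun h => systemSolvable_of_toZMod
      (by simpa [hβ] using h.systemSmoothlySolvable h2 hk h0)⟩
  refine eq_of_forall_exists_nonsquare_recursion
    (g := fun η => density fun b c D => ¬SystemSolvable 1 (β b) (p * η) c D)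
    (fun _ => density_mem_Icc _) (one_lt_pow₀ one_lt_natCast_prime two_ne_zero)
    (fun η => ⟨p ^ 2 * η, ?_⟩) η
  rw [density_eq_of_snd_trd_unit_iff_systemSolvable h2 hk
      fun b c D h0 => not_congr (hresidue η b c D h0),
    density_not_systemSolvable_mul_mul (hanisotropic η), mul_left_comm (_ ^ 2)]

theorem systemSolvable_one_mul_mul_iff_isSquare (hp : p ≠ 2) {β η c D : ℤ_[p]}
    (hD : toZMod D ≠ 0) : SystemSolvable 1 (p * β) (p * η) c D ↔ IsSquare (toZMod D) := by
  refine ⟨fun h => ?_, fun h => systemSolvable_of_toZMod ?_⟩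
  · obtain ⟨s, w, -, h⟩ := h.map toZMod
    exact ⟨w, by simpa [← pow_two] using h.symm⟩
  · simpa using systemSmoothlySolvable_one_zero_zero (two_ne_zero_zmod hp) hD h

theorem systemSolvable_prime_mul_iff_isSquare (hp : p ≠ 2) {β η c D : ℤ_[p]}
    (hβ : toZMod β ≠ 0) (hD : toZMod D ≠ 0) :
    SystemSolvable (p : ℤ_[p]) β (p * η) c D ↔ IsSquare (-toZMod β * toZMod D) := by
  refine ⟨fun h => ?_, fun h => systemSolvable_of_toZMod ?_⟩
  · obtain ⟨s, w, -, h⟩ := h.map toZMod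
    simp only [map_mul, map_natCast, CharP.cast_eq_zero, zero_mul, add_zero] at h
    exact ⟨toZMod β * s, by linear_combination toZMod β * h⟩
  · simpa using systemSmoothlySolvable_zero_zero (two_ne_zero_zmod hp) hβ hD h

theorem density_not_systemSolvable_one_mul_sq_mul (hp : p ≠ 2) (β : ℤ_[p] → ℤ_[p]) (η : ℤ_[p]) :
    (density fun b c D => ¬SystemSolvable 1 (p * β b) (p ^ 2 * η) c D) =
      (p : ℝ)⁻¹ * ((p - 1) / 2 + (1 - (p : ℝ)⁻¹ + (p : ℝ)⁻¹ *
        density fun b c D => ¬SystemSolvable (p : ℤ_[p]) (β b) (p * η) c D)) := by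
  rw [density_eq_of_trd_unit_iff hp one_ne_zero fun b c D hD => ?_,
    density_eq_of_snd_unit_imp]
  · simp only [systemSolvable_one_mul_mul_iff prime_p]
  · intro b c D hc h
    rw [pow_two, mul_assoc] at h
    exact hc <| toZMod_eq_zero_iff_dvd.2 (h.dvd_of_mul_mul prime_p)
  · rw [pow_two, mul_assoc, systemSolvable_one_mul_mul_iff_isSquare hp hD, one_mul]

theorem density_not_systemSolvable_prime_mul (hp : p ≠ 2) {k : ZMod p} (hk : k ≠ 0)
    {β : ℤ_[p] → ℤ_[p]} (hβ : ∀ b, toZMod (β b) = k) (η : ℤ_[p]) :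
    (density fun b c D => ¬SystemSolvable (p : ℤ_[p]) (β b) (p * η) c D) =
      (p : ℝ)⁻¹ * ((p - 1) / 2 + (1 - (p : ℝ)⁻¹ + (p : ℝ)⁻¹ *
        density fun b c D => ¬SystemSolvable 1 (p * β b) (p ^ 2 * (p ^ 2 * η)) c D)) := by
  have hβ0 (b : ℤ_[p]) : ¬(p : ℤ_[p]) ∣ β b := by rwa [← toZMod_eq_zero_iff_dvd, hβ]
  rw [density_eq_of_trd_unit_iff hp (neg_ne_zero.2 hk) fun b c D hD => ?_,
    density_eq_of_snd_unit_imp]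
  · simp only [systemSolvable_prime_mul_mul_iff prime_p (hβ0 _)]
  · exact fun b c D hc h => hc <| toZMod_eq_zero_iff_dvd.2 (h.dvd_of_not_dvd prime_p (hβ0 b))
  · rw [systemSolvable_prime_mul_iff_isSquare hp (by rwa [hβ]) hD, hβ]

theorem density_not_systemSolvable_of_ne_zero (hp : p ≠ 2) {k : ZMod p} (hk : k ≠ 0)
    {β : ℤ_[p] → ℤ_[p]} (hβ : ∀ b, toZMod (β b) = k) (η : ℤ_[p]) :
    (density fun b c D => ¬SystemSolvable 1 (p * β b) (p ^ 2 * η) c D) =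
      ((p : ℝ) + 2) / (2 * ((p : ℝ) + 1)) := by
  let g : ℤ_[p] ⊕ ℤ_[p] → ℝ := Sum.elim
    (fun η => density fun b c D => ¬SystemSolvable 1 (p * β b) (p ^ 2 * η) c D)
    (fun η => density fun b c D => ¬SystemSolvable (p : ℤ_[p]) (β b) (p * η) c D)
  have hg (i) : g i ∈ Set.Icc 0 1 := by
    cases i <;> simp only [g, Sum.elim_inl, Sum.elim_inr, density_mem_Icc]
  refine eq_of_forall_exists_nonsquare_recursion hg one_lt_natCast_prime ?_ (Sum.inl η)
  rintro (η | η)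
  · exact ⟨Sum.inr η, density_not_systemSolvable_one_mul_sq_mul hp β η⟩
  · exact ⟨Sum.inl (p ^ 2 * η), density_not_systemSolvable_prime_mul hp hk hβ η⟩

end SystemDensity

section ScaledDensities

variable {p : ℕ} [Fact p.Prime]

open PadicInt (toZMod prime_p)

theorem not_dvd_two (hp : p ≠ 2) : ¬(p : ℤ_[p]) ∣ 2 := by
  rw [← toZMod_eq_zero_iff_dvd, map_ofNat]
  exact two_ne_zero_zmod hp

theorem four_ne_zero_zmod (hp : p ≠ 2) : (4 : ZMod p) ≠ 0 := by
  have h := pow_ne_zero 2 (two_ne_zero_zmod hp)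
  norm_num at h
  exact h

theorem toZMod_two_mul_consDigit (r : ZMod p) (b : ℤ_[p]) :
    toZMod (2 * consDigit r b) = 2 * r := by
  rw [map_mul, map_ofNat, toZMod_consDigit]

theorem toZMod_four_mul_ne_zero (hp : p ≠ 2) {c : ℤ_[p]} (hc : toZMod c ≠ 0) :
    toZMod (4 * c) ≠ 0 := by
  rw [map_mul, map_ofNat]
  exact mul_ne_zero (four_ne_zero_zmod hp) hc

theorem exists_prime_mul_eval_add_mul_eq (G : ℤ_[p][X]) {u : ℤ_[p]} (hu : toZMod u ≠ 0)
    (D : ℤ_[p]) : ∃ y, p * G.eval y + u * y = D := by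
  obtain ⟨y, hy, -⟩ := exists_root_of_toZMod (f := C (p : ℤ_[p]) * G + C u * X - C D)
    (r := toZMod D / toZMod u) (by simp [mul_div_cancel₀ _ hu]) (by simpa using hu)
  exact ⟨y, by simpa [sub_eq_zero] using hy⟩

theorem isReducibleQuartic_mul_mul_sq_mul_of_ne_zero (hp : p ≠ 2) (b : ℤ_[p]) {c : ℤ_[p]}
    (hc : toZMod c ≠ 0) (D : ℤ_[p]) : IsReducibleQuartic (p * b) (p * c) (p ^ 2 * D) := by
  obtain ⟨y, hy⟩ := exists_prime_mul_eval_add_mul_eq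
    (C (4 * (p : ℤ_[p])) * X ^ 4 + C (4 * b) * X ^ 2) (u := 4 * c)
    (toZMod_four_mul_ne_zero hp hc) (D - b ^ 2)
  simp only [eval_add, eval_mul, eval_C, eval_pow, eval_X] at hy
  exact Or.inl ⟨p * y, by linear_combination (p : ℤ_[p]) ^ 2 * hy⟩

theorem isReducibleQuartic_sq_mul_sq_mul_cube_mul_of_ne_zero (hp : p ≠ 2) (b : ℤ_[p])
    {c : ℤ_[p]} (hc : toZMod c ≠ 0) (D : ℤ_[p]) :
    IsReducibleQuartic (p ^ 2 * b) (p ^ 2 * c) (p ^ 3 * D) := by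
  obtain ⟨y, hy⟩ := exists_prime_mul_eval_add_mul_eq ((C 2 * X ^ 2 + C b) ^ 2) (u := 4 * c)
    (toZMod_four_mul_ne_zero hp hc) D
  simp only [eval_add, eval_mul, eval_C, eval_pow, eval_X] at hy
  exact Or.inl ⟨p * y, by linear_combination (p : ℤ_[p]) ^ 3 * hy⟩

theorem toZMod_eq_sq_of_hasRoot (hp : p ≠ 2) {b c D : ℤ_[p]}
    (h : HasRoot (p * b) (p ^ 2 * c) (p ^ 2 * D)) : toZMod D = toZMod b ^ 2 := by
  have hdvd := h.dvd_sub_sq prime_p (not_dvd_two hp)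
  rwa [← toZMod_eq_zero_iff_dvd, map_sub, map_pow, sub_eq_zero] at hdvd

theorem systemSolvable_mul_sq_mul_sq_mul_iff_isSquare (hp : p ≠ 2) {b c D : ℤ_[p]}
    (hD : toZMod D ≠ 0) :
    SystemSolvable 1 (2 * (p * b)) 1 (p ^ 2 * c) (p ^ 2 * D) ↔ IsSquare (toZMod D) := by
  rw [systemSolvable_mul_sq_mul_sq_mul_iff prime_p, mul_left_comm, pow_two,
    systemSolvable_one_mul_mul_iff_isSquare hp hD]

theorem isReducibleQuartic_mul_sq_mul_sq_mul_iff_isSquare (hp : p ≠ 2) {b c D : ℤ_[p]}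
    (hD : toZMod D ≠ 0) :
    IsReducibleQuartic (p * b) (p ^ 2 * c) (p ^ 2 * D) ↔ IsSquare (toZMod D) := by
  rw [IsReducibleQuartic, systemSolvable_mul_sq_mul_sq_mul_iff_isSquare hp hD,
    or_iff_right_of_imp]
  intro h
  rw [toZMod_eq_sq_of_hasRoot hp h]
  exact IsSquare.sq _

theorem isReducibleQuartic_mul_sq_mul_sq_mul_iff_systemSolvable (hp : p ≠ 2) {b c D : ℤ_[p]}
    (hb : toZMod b ≠ 0) : IsReducibleQuartic (p * b) (p ^ 2 * c) (p ^ 2 * D) ↔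
      SystemSolvable 1 (p * (2 * b)) (p ^ 2 * 1) c D := by
  rw [IsReducibleQuartic, or_iff_right_of_imp, systemSolvable_mul_sq_mul_sq_mul_iff prime_p,
    mul_left_comm, mul_one]
  intro h
  have hD := toZMod_eq_sq_of_hasRoot hp h
  refine (systemSolvable_mul_sq_mul_sq_mul_iff_isSquare hp ?_).2 ?_ <;> rw [hD]
  · exact pow_ne_zero 2 hb
  · exact IsSquare.sq _

/-- The probability that the depressed quartic with parameters `(pⁱ b, pʲ c, pᵏ D)` is irreducible,
for random `b, c, D ∈ ℤ_p`: the contribution of one region in the successive peeling of digits. -/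
noncomputable def scaledDensity (p : ℕ) [Fact p.Prime] (i j k : ℕ) : ℝ :=
  density fun b c D : ℤ_[p] => ¬IsReducibleQuartic (p ^ i * b) (p ^ j * c) (p ^ k * D)

theorem scaledDensity_eq_of_snd_unit {i j k : ℕ} (h : ∀ b c D : ℤ_[p], toZMod c ≠ 0 →
      IsReducibleQuartic (p ^ i * b) (p ^ j * c) (p ^ k * D)) :
    scaledDensity p i j k = (p : ℝ)⁻¹ * scaledDensity p i (j + 1) k := by
  rw [scaledDensity, density_eq_of_snd_unit_imp_not fun b c D hc => not_not.2 (h b c D hc)]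
  simp only [scaledDensity, pow_succ, mul_assoc]

theorem scaledDensity_eq_of_trd_unit {i j k : ℕ} (h : ∀ b c D : ℤ_[p], toZMod D ≠ 0 →
      ¬IsReducibleQuartic (p ^ i * b) (p ^ j * c) (p ^ k * D)) :
    scaledDensity p i j k = 1 - (p : ℝ)⁻¹ + (p : ℝ)⁻¹ * scaledDensity p i j (k + 1) := by
  rw [scaledDensity, density_eq_of_trd_unit_imp h]
  simp only [scaledDensity, pow_succ, mul_assoc]

theorem scaledDensity_one_one_one (hp : p ≠ 2) :
    scaledDensity p 1 1 1 = 1 - (p : ℝ)⁻¹ + (p : ℝ)⁻¹ * scaledDensity p 1 1 2 :=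
  scaledDensity_eq_of_trd_unit fun b c D hD => by
    simpa only [pow_one] using not_isReducibleQuartic_mul_mul_mul prime_p (not_dvd_two hp)
      (mt toZMod_eq_zero_iff_dvd.2 hD)

theorem scaledDensity_one_one_two (hp : p ≠ 2) :
    scaledDensity p 1 1 2 = (p : ℝ)⁻¹ * scaledDensity p 1 2 2 :=
  scaledDensity_eq_of_snd_unit fun b c D hc => by
    simpa only [pow_one] using isReducibleQuartic_mul_mul_sq_mul_of_ne_zero hp b hc D

theorem scaledDensity_one_two_two (hp : p ≠ 2) :
    scaledDensity p 1 2 2 = (1 - (p : ℝ)⁻¹) * (((p : ℝ) + 2) / (2 * ((p : ℝ) + 1))) +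
      (p : ℝ)⁻¹ * scaledDensity p 2 2 2 := by
  rw [scaledDensity, density_eq_of_fst_unit (A := ((p : ℝ) + 2) / (2 * ((p : ℝ) + 1)))]
  · simp only [scaledDensity, pow_succ, pow_zero, one_mul, mul_assoc]
  · intro r hr
    rw [← density_not_systemSolvable_of_ne_zero hp (mul_ne_zero (two_ne_zero_zmod hp) hr)
      (β := fun b => 2 * consDigit r b) (toZMod_two_mul_consDigit r) 1]
    refine density_congr fun b c D => ?_
    rw [pow_one, isReducibleQuartic_mul_sq_mul_sq_mul_iff_systemSolvable hp (by simpa using hr)]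

theorem scaledDensity_two_two_two (hp : p ≠ 2) :
    scaledDensity p 2 2 2 = (p : ℝ)⁻¹ * ((p - 1) / 2 + scaledDensity p 2 2 3) := by
  rw [scaledDensity, density_eq_of_trd_unit_iff hp one_ne_zero]
  · simp only [scaledDensity, pow_succ, mul_assoc]
  · intro b c D hD
    rw [one_mul, pow_two, mul_assoc, ← pow_two,
      isReducibleQuartic_mul_sq_mul_sq_mul_iff_isSquare hp hD]

theorem scaledDensity_two_two_three (hp : p ≠ 2) :
    scaledDensity p 2 2 3 = (p : ℝ)⁻¹ * scaledDensity p 2 3 3 :=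
  scaledDensity_eq_of_snd_unit fun b _ D hc =>
    isReducibleQuartic_sq_mul_sq_mul_cube_mul_of_ne_zero hp b hc D

theorem scaledDensity_two_three_three (hp : p ≠ 2) :
    scaledDensity p 2 3 3 = 1 - (p : ℝ)⁻¹ + (p : ℝ)⁻¹ * scaledDensity p 2 3 4 :=
  scaledDensity_eq_of_trd_unit fun _ _ _ hD =>
    not_isReducibleQuartic_sq_mul_cube_mul_cube_mul prime_p (not_dvd_two hp)
      (mt toZMod_eq_zero_iff_dvd.2 hD)

theorem scaledDensity_two_three_four (hp : p ≠ 2) :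
    scaledDensity p 2 3 4 = density fun b c D : ℤ_[p] => ¬IsReducibleQuartic b c D :=
  density_congr fun _ _ _ =>
    not_congr (isReducibleQuartic_sq_mul_cube_mul_pow_four_mul_iff prime_p (not_dvd_two hp))

theorem density_not_isReducibleQuartic_consDigit (hp : p ≠ 2) {r : ZMod p}
    (hr : ¬IsSquare (-2 * r)) :
    (density fun b c D => ¬IsReducibleQuartic (consDigit r b) (p * c) (p * D)) =
      1 - (2 * ((p : ℝ) ^ 2 + 1))⁻¹ := by
  have hnoroot (b c D : ℤ_[p]) : ¬HasRoot (consDigit r b) (p * c) (p * D) := fun h => by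
    obtain ⟨x, hx⟩ := h.map toZMod
    refine hr ⟨2 * x, ?_⟩
    have hx0 : 2 * x ^ 2 + r = 0 := by simpa using hx
    linear_combination -2 * hx0
  have hk : ¬IsSquare (-(2 * r)) := by rwa [← neg_mul]
  have hanisotropic (b s : ℤ_[p]) (h : (p : ℤ_[p]) ∣ 2 * consDigit r b * s ^ 2 + 1 * s ^ 4) :
      (p : ℤ_[p]) ∣ s := by
    rw [← toZMod_eq_zero_iff_dvd] at h ⊢
    simp only [map_add, map_mul, map_pow, map_one, map_ofNat, toZMod_consDigit] at h
    by_contra hs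
    exact hr ⟨toZMod s, mul_left_cancel₀ (pow_ne_zero 2 hs) (by linear_combination -h)⟩
  simp only [IsReducibleQuartic, hnoroot, false_or]
  rw [density_not_systemSolvable_mul_mul hanisotropic, pow_two (p : ℤ_[p]), mul_assoc,
    density_not_systemSolvable_of_not_isSquare hp hk (toZMod_two_mul_consDigit r)]
  have hp0 : (p : ℝ) ≠ 0 := (zero_lt_one.trans one_lt_natCast_prime).ne'
  field_simp
  ring

theorem density_not_isReducibleQuartic_eq_average (hp : p ≠ 2) :
    (density fun b c D : ℤ_[p] => ¬IsReducibleQuartic b c D) = ((p : ℝ) ^ 3)⁻¹ *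
      (((p : ℝ) ^ 3 - p) / 4 + scaledDensity p 1 1 1 +
        (p - 1) / 2 * (1 - (2 * ((p : ℝ) ^ 2 + 1))⁻¹)) := by
  have h2 := two_ne_zero_zmod hp
  have hred (b : ZMod p) : IsReducibleQuartic b 0 0 := Or.inr ⟨0, 0, by simp, by simp⟩
  have hcount : ({t : ZMod p × ZMod p × ZMod p | ¬IsReducibleQuartic t.1 t.2.1 t.2.2}.ncard : ℝ) =
      ((p : ℝ) ^ 3 - p) / 4 := by
    have h := four_mul_ncard_not_isReducibleQuartic (mul_inv_cancel₀ (four_ne_zero_zmod hp))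
    rw [Nat.card_zmod] at h
    rw [eq_div_iff four_ne_zero, eq_sub_iff_add_eq, mul_comm]
    exact_mod_cast h
  have hsum : ∑ r : ZMod p,
      (density fun b c D => ¬IsReducibleQuartic (consDigit r b) (p * c) (p * D)) =
        scaledDensity p 1 1 1 + (p - 1) / 2 * (0 + (1 - (2 * ((p : ℝ) ^ 2 + 1))⁻¹)) := by
    rw [sum_eq_of_isSquare_mul (by rwa [ZMod.ringChar_zmod_n]) (neg_ne_zero.2 h2), ZMod.card]
    · simp only [scaledDensity, consDigit_zero, pow_one]
    · refine fun r hr hsq => density_eq_zero fun b c D => not_not.2 ?_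
      refine isReducibleQuartic_of_toZMod h2 ?_ ?_
      · simpa [hr] using hsq
      · simpa using hred r
    · exact fun r => density_not_isReducibleQuartic_consDigit hp
  rw [density_eq_of_residues_ne_zero_iff (Q := fun b c D => ¬IsReducibleQuartic b c D)
    (fun b => not_not.2 (hred b)) fun b c D h0 => not_congr ⟨fun h => h.map toZMod,
      isReducibleQuartic_of_toZMod h2 fun h => h0 ⟨h.1, h.2.1⟩⟩, hcount, hsum, zero_add, add_assoc]

theorem density_not_isReducibleQuartic (hp : p ≠ 2) :
    (density fun b c D : ℤ_[p] => ¬IsReducibleQuartic b c D) =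
      ((p : ℝ) ^ 12 + (p : ℝ) ^ 11 + 2 * (p : ℝ) ^ 10 + 4 * (p : ℝ) ^ 9 -
          2 * (p : ℝ) ^ 8 + (p : ℝ) ^ 7 + 3 * (p : ℝ) ^ 6 - 6 * (p : ℝ) ^ 5 +
          6 * (p : ℝ) ^ 4 - 4 * (p : ℝ) ^ 3 - 2 * (p : ℝ) ^ 2 - 4) /
        (4 * ((p : ℝ) + 1) * ((p : ℝ) ^ 2 + 1) * ((p : ℝ) ^ 9 - 1)) := by
  have h := density_not_isReducibleQuartic_eq_average hp
  rw [scaledDensity_one_one_one hp, scaledDensity_one_one_two hp, scaledDensity_one_two_two hp,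
    scaledDensity_two_two_two hp, scaledDensity_two_two_three hp, scaledDensity_two_three_three hp,
    scaledDensity_two_three_four hp] at h
  generalize (density fun b c D : ℤ_[p] => ¬IsReducibleQuartic b c D) = α at h ⊢
  have hp0 : (p : ℝ) ≠ 0 := (zero_lt_one.trans one_lt_natCast_prime).ne'
  have hp1 : (p : ℝ) + 1 ≠ 0 := by positivity
  have hp2 : (p : ℝ) ^ 2 + 1 ≠ 0 := by positivity
  have hp9 : (p : ℝ) ^ 9 - 1 ≠ 0 :=
    (sub_pos.2 (one_lt_pow₀ one_lt_natCast_prime (by norm_num))).ne'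
  rw [eq_div_iff (by positivity)]
  field_simp at h
  linear_combination h / 4

theorem isUnit_four (hp : p ≠ 2) : IsUnit (4 : ℤ_[p]) :=
  isUnit_of_toZMod_ne_zero (by simpa only [map_ofNat] using four_ne_zero_zmod hp)

end ScaledDensities

end QuarticDensity

/-- Main quartic theorem: for odd `p`, the Haar-measure proportion of monic
degree-4 polynomials over `ℤ_p` (identified with `ℤ_p⁴` via their non-leading
coefficients) that are irreducible equals the stated rational function of `p`. -/
theorem stmt_19 (p : ℕ) [Fact p.Prime] (hodd : p ≠ 2)
    (μ : Measure (Fin 4 → ℤ_[p])) [μ.IsAddHaarMeasure] :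
    (μ {c : Fin 4 → ℤ_[p] |
        Irreducible (X ^ 4 + ∑ i : Fin 4, C (c i) * X ^ (i : ℕ))}).toReal /
      (μ Set.univ).toReal =
      ((p : ℝ) ^ 12 + (p : ℝ) ^ 11 + 2 * (p : ℝ) ^ 10 + 4 * (p : ℝ) ^ 9 -
          2 * (p : ℝ) ^ 8 + (p : ℝ) ^ 7 + 3 * (p : ℝ) ^ 6 - 6 * (p : ℝ) ^ 5 +
          6 * (p : ℝ) ^ 4 - 4 * (p : ℝ) ^ 3 - 2 * (p : ℝ) ^ 2 - 4) /
        (4 * ((p : ℝ) + 1) * ((p : ℝ) ^ 2 + 1) * ((p : ℝ) ^ 9 - 1)) := by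
  have h4 := QuarticDensity.isUnit_four hodd
  obtain ⟨v, hv⟩ := h4.exists_right_inv
  have hirreducible : {c : Fin 4 → ℤ_[p] |
        Irreducible (X ^ 4 + ∑ i : Fin 4, C (c i) * X ^ (i : ℕ))} =
      {c | QuarticDensity.depress (v * c 3) (c 2) (c 1) (c 0) ∈
        {x | ¬QuarticDensity.IsReducibleQuartic x.1 x.2.1 x.2.2}} :=
    Set.ext fun _ => QuarticDensity.irreducible_quartic_iff_depress hv rfl
  rw [QuarticDensity.toReal_div_toReal_univ, hirreducible,
    QuarticDensity.haarProb_real_depress_mem h4 v]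
  exact QuarticDensity.density_not_isReducibleQuartic hodd
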